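/- arXiv:2212.07974 — 2 statements merged into one kernel-verified Lean document; each statement's English description precedes it below -/
import Mathlib

section
/- For every ρ ∈ (-1,0), every β ∈ ℝ and every t > 0, one has ∫_0^∞ φ(ρ, β, -x) · e^{-xt} dx = E_{-ρ, β−ρ}(-t), the integral being absolutely convergent. -/
open MeasureTheory

/-- The Wright function `φ(ρ, β, x) = ∑ x^n / (n! Γ(β + ρ n))`. -/
noncomputable def wright (ρ β x : ℝ) : ℝ :=
  ∑' n : ℕ, x ^ n / ((n.factorial : ℝ) * Real.Gamma (β + ρ * n))

/-- The two-parameter Mittag-Leffler function `E_{α,β}(z) = ∑ z^n / Γ(β + αn)`. -/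
noncomputable def mittagLeffler (α β z : ℝ) : ℝ :=
  ∑' n : ℕ, z ^ n / Real.Gamma (β + α * n)

/-- The point `c + r e^{iδ}` of the contour. -/
noncomputable def wS (δ c r : ℝ) : ℂ := (c : ℂ) + (r : ℂ) * Complex.exp (δ * Complex.I)

lemma wS_re (δ c r : ℝ) : (wS δ c r).re = c + r * Real.cos δ := by
  simp [wS, Complex.exp_ofReal_mul_I_re]

lemma wS_im (δ c r : ℝ) : (wS δ c r).im = r * Real.sin δ := by
  simp [wS, Complex.exp_ofReal_mul_I_im]

lemma wS_norm_le (δ c r : ℝ) (hc : 0 ≤ c) (hr : 0 ≤ r) : ‖wS δ c r‖ ≤ c + r := by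
  unfold wS
  refine (norm_add_le _ _).trans ?_
  rw [norm_mul, Complex.norm_exp_ofReal_mul_I, Complex.norm_real, Complex.norm_real]
  simp [abs_of_nonneg hc, abs_of_nonneg hr]

lemma wS_norm_ge (δ c r : ℝ) (hs : 0 ≤ Real.sin δ) (hc : 0 ≤ c) :
    c * Real.sin δ ≤ ‖wS δ c r‖ := by
  have h1 : ‖wS δ c r‖ ^ 2 = (c + r * Real.cos δ) ^ 2 + (r * Real.sin δ) ^ 2 := by
    rw [← wS_re, ← wS_im, Complex.sq_norm, Complex.normSq_apply]; ring
  have h2 := Real.sin_sq_add_cos_sq δ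
  refine le_of_sq_le_sq ?_ (norm_nonneg _)
  rw [h1]
  have : (c + r * Real.cos δ) ^ 2 + (r * Real.sin δ) ^ 2 - (c * Real.sin δ) ^ 2
      = (c * Real.cos δ + r) ^ 2 := by
    linear_combination (r ^ 2 - c ^ 2) * h2
  nlinarith [sq_nonneg (c * Real.cos δ + r)]

lemma wS_slit (δ c r : ℝ) (hs : 0 < Real.sin δ) (hc : 0 ≤ c) (hr : 0 ≤ r) (h : 0 < c ∨ 0 < r) :
    wS δ c r ∈ Complex.slitPlane := by
  rw [Complex.mem_slitPlane_iff, wS_re, wS_im]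
  rcases hr.eq_or_lt with rfl | hr
  · left; rcases h with h | h <;> simp_all
  · right; positivity

lemma wS_arg_nonneg (δ c r : ℝ) (hs : 0 < Real.sin δ) (hr : 0 ≤ r) :
    0 ≤ (wS δ c r).arg := by
  rw [Complex.arg_nonneg_iff, wS_im]; positivity

lemma wS_arg_le (δ c r : ℝ) (h0 : 0 < δ) (hpi : δ < Real.pi) (hc : 0 < c) (hr : 0 ≤ r) :
    (wS δ c r).arg ≤ δ := by
  have hs : 0 < Real.sin δ := Real.sin_pos_of_pos_of_lt_pi h0 hpi
  have h1 := Complex.norm_mul_cos_arg (wS δ c r)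
  have h2 := Complex.norm_mul_sin_arg (wS δ c r)
  rw [wS_re] at h1
  rw [wS_im] at h2
  by_contra hlt
  push Not at hlt
  have hp : 0 < Real.sin ((wS δ c r).arg - δ) :=
    Real.sin_pos_of_pos_of_lt_pi (by linarith) (by linarith [Complex.arg_le_pi (wS δ c r)])
  rw [Real.sin_sub] at hp
  have hn := norm_nonneg (wS δ c r)
  have h3 : ‖wS δ c r‖ * (Real.sin (wS δ c r).arg * Real.cos δ - Real.cos (wS δ c r).arg * Real.sin δ)
      = - (c * Real.sin δ) := by
    linear_combination Real.cos δ * h2 - Real.sin δ * h1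
  nlinarith [mul_pos hc hs, mul_nonneg hn hp.le]

lemma wS_rpow_re_nonneg (δ c r α : ℝ) (h0 : 0 < δ) (hpi : δ < Real.pi) (hc : 0 < c) (hr : 0 ≤ r)
    (hα : 0 < α) (hαδ : δ * α ≤ Real.pi / 2) : 0 ≤ ((wS δ c r) ^ (α : ℂ)).re := by
  rw [Complex.cpow_ofReal_re]
  have hs : 0 < Real.sin δ := Real.sin_pos_of_pos_of_lt_pi h0 hpi
  have h1 := wS_arg_nonneg δ c r hs hr
  have h2 := wS_arg_le δ c r h0 hpi hc hr
  refine mul_nonneg (by positivity) (Real.cos_nonneg_of_mem_Icc ⟨?_, ?_⟩)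
  · have := mul_nonneg h1 hα.le
    linarith [Real.pi_pos]
  · exact (mul_le_mul_of_nonneg_right h2 hα.le).trans hαδ

lemma rpow_le_exp (p ε : ℝ) (hp : 0 ≤ p) (hε : 0 < ε) :
    ∃ K : ℝ, 0 < K ∧ ∀ y : ℝ, 0 ≤ y → y ^ p ≤ K * Real.exp (ε * y) := by
  obtain ⟨n, hn⟩ := exists_nat_ge p
  refine ⟨1 + n.factorial / ε ^ n, by positivity, fun y hy => ?_⟩
  have h1 : y ^ p ≤ 1 + y ^ n := by
    rcases le_total y 1 with h | h
    · have := Real.rpow_le_one hy h hp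
      have := pow_nonneg hy n
      linarith
    · have := Real.rpow_le_rpow_of_exponent_le h hn
      rw [Real.rpow_natCast] at this
      linarith
  have h2 := Real.pow_div_factorial_le_exp (ε * y) (by positivity) n
  have h3 : (1 : ℝ) ≤ Real.exp (ε * y) := Real.one_le_exp (by positivity)
  have h4 : y ^ n ≤ n.factorial / ε ^ n * Real.exp (ε * y) := by
    have : y ^ n = n.factorial / ε ^ n * ((ε * y) ^ n / n.factorial) := by
      rw [mul_pow]; field_simp
    rw [this]; gcongr
  linarith

lemma wS_rpow_le (δ p ε C : ℝ) (hp : 0 ≤ p) (hε : 0 < ε) :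
    ∃ K : ℝ, 0 < K ∧ ∀ c r : ℝ, 0 ≤ c → c ≤ C → 0 ≤ r →
      ‖wS δ c r‖ ^ p ≤ K * Real.exp (ε * r) := by
  obtain ⟨K, hK, h⟩ := rpow_le_exp p ε hp hε
  refine ⟨K * Real.exp (ε * C), by positivity, fun c r hc hcC hr => ?_⟩
  refine (h _ (norm_nonneg _)).trans ?_
  rw [mul_assoc, ← Real.exp_add]
  gcongr
  have := wS_norm_le δ c r hc hr
  nlinarith

lemma wS_rpow_le' (δ p ε c₁ C : ℝ) (hs : 0 < Real.sin δ) (hc₁ : 0 < c₁) (hε : 0 < ε) :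
    ∃ K : ℝ, 0 < K ∧ ∀ c r : ℝ, c₁ ≤ c → c ≤ C → 0 ≤ r →
      ‖wS δ c r‖ ^ p ≤ K * Real.exp (ε * r) := by
  rcases le_total 0 p with hp | hp
  · obtain ⟨K, hK, h⟩ := wS_rpow_le δ p ε C hp hε
    exact ⟨K, hK, fun c r hc hC hr => h c r (hc₁.le.trans hc) hC hr⟩
  · refine ⟨(c₁ * Real.sin δ) ^ p, by positivity, fun c r hc hC hr => ?_⟩
    have h1 : (c₁ * Real.sin δ) ≤ ‖wS δ c r‖ :=
      (mul_le_mul_of_nonneg_right hc hs.le).trans (wS_norm_ge δ c r hs.le (hc₁.le.trans hc))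
    have h2 := Real.rpow_le_rpow_of_nonpos (by positivity) h1 hp
    have h3 : (1 : ℝ) ≤ Real.exp (ε * r) := Real.one_le_exp (by positivity)
    have h4 : 0 < (c₁ * Real.sin δ) ^ p := by positivity
    nlinarith

lemma norm_exp_wS (δ c r : ℝ) :
    ‖Complex.exp (wS δ c r)‖ = Real.exp c * Real.exp (Real.cos δ * r) := by
  rw [Complex.norm_exp, wS_re, ← Real.exp_add, mul_comm r]

/-- Integrand `e^s s^q`. -/
noncomputable def wh (δ q c r : ℝ) : ℂ := Complex.exp (wS δ c r) * (wS δ c r) ^ (q : ℂ)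

lemma wh_bound_aux (δ q C c r K : ℝ) (hC : c ≤ C) (hK : 0 < K)
    (h : ‖wS δ c r‖ ^ q ≤ K * Real.exp (-(Real.cos δ / 2) * r)) :
    ‖wh δ q c r‖ ≤ Real.exp C * K * Real.exp (-(-(Real.cos δ / 2)) * r) := by
  rw [wh, norm_mul, norm_exp_wS, Complex.norm_cpow_real]
  calc _ ≤ Real.exp C * Real.exp (Real.cos δ * r) * (K * Real.exp (-(Real.cos δ / 2) * r)) := by
        gcongr
    _ = Real.exp C * K * (Real.exp (Real.cos δ * r) * Real.exp (-(Real.cos δ / 2) * r)) := by ring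
    _ = _ := by rw [← Real.exp_add]; congr 2; ring

lemma wh_bound (δ q C : ℝ) (hq : 0 ≤ q) (hcos : Real.cos δ < 0) :
    ∃ K : ℝ, 0 < K ∧ ∀ c r : ℝ, 0 ≤ c → c ≤ C → 0 ≤ r →
      ‖wh δ q c r‖ ≤ K * Real.exp (-(-(Real.cos δ / 2)) * r) := by
  obtain ⟨K, hK, h⟩ := wS_rpow_le δ q (-(Real.cos δ / 2)) C hq (by linarith)
  exact ⟨Real.exp C * K, by positivity, fun c r hc hC hr =>
    wh_bound_aux δ q C c r K hC hK (h c r hc hC hr)⟩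

lemma wh_bound' (δ q c₁ C : ℝ) (hs : 0 < Real.sin δ) (hc₁ : 0 < c₁) (hcos : Real.cos δ < 0) :
    ∃ K : ℝ, 0 < K ∧ ∀ c r : ℝ, c₁ ≤ c → c ≤ C → 0 ≤ r →
      ‖wh δ q c r‖ ≤ K * Real.exp (-(-(Real.cos δ / 2)) * r) := by
  obtain ⟨K, hK, h⟩ := wS_rpow_le' δ q (-(Real.cos δ / 2)) c₁ C hs hc₁ (by linarith)
  exact ⟨Real.exp C * K, by positivity, fun c r hc hC hr =>
    wh_bound_aux δ q C c r K hC hK (h c r hc hC hr)⟩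

lemma wS_measurable (δ c : ℝ) : Measurable (fun r : ℝ => wS δ c r) := by
  unfold wS; fun_prop

lemma wh_measurable (δ q c : ℝ) : Measurable (fun r : ℝ => wh δ q c r) := by
  have := wS_measurable δ c
  unfold wh; fun_prop

lemma wexp_integrable (K b : ℝ) (hb : 0 < b) :
    Integrable (fun r : ℝ => K * Real.exp (-b * r)) (volume.restrict (Set.Ioi 0)) :=
  (exp_neg_integrableOn_Ioi 0 hb).const_mul K

lemma integrable_of_bound {E : Type*} [NormedAddCommGroup E] {f : ℝ → E} (K b : ℝ) (hb : 0 < b)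
    (hm : AEStronglyMeasurable f (volume.restrict (Set.Ioi 0)))
    (h : ∀ r : ℝ, 0 < r → ‖f r‖ ≤ K * Real.exp (-b * r)) :
    Integrable f (volume.restrict (Set.Ioi 0)) := by
  refine (wexp_integrable K b hb).mono' hm ?_
  filter_upwards [ae_restrict_mem measurableSet_Ioi] with r hr using h r hr

lemma wh_integrable (δ q c : ℝ) (hs : 0 < Real.sin δ) (hc : 0 < c) (hcos : Real.cos δ < 0) :
    Integrable (fun r => wh δ q c r) (volume.restrict (Set.Ioi 0)) := by
  obtain ⟨K, hK, h⟩ := wh_bound' δ q c c hs hc hcos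
  exact integrable_of_bound K (-(Real.cos δ / 2)) (by linarith)
    (wh_measurable δ q c).aestronglyMeasurable (fun r hr => h c r le_rfl le_rfl hr.le)

lemma wh_hasDerivAt_z (q : ℝ) (z : ℂ) (hz : z ∈ Complex.slitPlane) :
    HasDerivAt (fun z : ℂ => Complex.exp z * z ^ (q : ℂ))
      (Complex.exp z * z ^ (q : ℂ) + q * (Complex.exp z * z ^ ((q - 1 : ℝ) : ℂ))) z := by
  have h := (Complex.hasDerivAt_exp z).mul ((hasDerivAt_id z).cpow_const (c := (q : ℂ)) hz)
  refine h.congr_deriv ?_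
  push_cast
  simp only [id]
  ring

lemma wh_deriv_c (δ q c r : ℝ) (hz : wS δ c r ∈ Complex.slitPlane) :
    HasDerivAt (fun c : ℝ => wh δ q c r) (wh δ q c r + q * wh δ (q - 1) c r) c := by
  have h1 : HasDerivAt (fun c : ℝ => wS δ c r) 1 c :=
    (Complex.ofRealCLM.hasDerivAt (x := c)).add_const _
  have h := (wh_hasDerivAt_z q _ hz).comp c h1
  rw [mul_one] at h
  exact h

lemma wh_deriv_r (δ q c r : ℝ) (hz : wS δ c r ∈ Complex.slitPlane) :
    HasDerivAt (fun r : ℝ => wh δ q c r)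
      (Complex.exp (δ * Complex.I) * (wh δ q c r + q * wh δ (q - 1) c r)) r := by
  have h1 : HasDerivAt (fun r : ℝ => wS δ c r) (Complex.exp (δ * Complex.I)) r := by
    have := ((Complex.ofRealCLM.hasDerivAt (x := r)).mul_const (Complex.exp (δ * Complex.I))).const_add (c : ℂ)
    simpa [wS] using this
  have h := (wh_hasDerivAt_z q _ hz).comp r h1
  rw [mul_comm] at h
  exact h

lemma wh_ftc (δ q c : ℝ) (hs : 0 < Real.sin δ) (hc : 0 < c) (hcos : Real.cos δ < 0) :
    ∫ r in Set.Ioi (0 : ℝ), Complex.exp (δ * Complex.I) * (wh δ q c r + q * wh δ (q - 1) c r)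
      = -((Real.exp c * c ^ q : ℝ) : ℂ) := by
  have h := integral_Ioi_of_hasDerivAt_of_tendsto (f := fun r => wh δ q c r) (a := 0) (m := 0)
    (f' := fun r => Complex.exp (δ * Complex.I) * (wh δ q c r + q * wh δ (q - 1) c r))
    (wh_deriv_r δ q c 0 (wS_slit δ c 0 hs hc.le le_rfl (Or.inl hc))).continuousAt.continuousWithinAt
    (fun r hr => wh_deriv_r δ q c r (wS_slit δ c r hs hc.le (le_of_lt hr) (Or.inl hc)))
    (((wh_integrable δ q c hs hc hcos).add ((wh_integrable δ (q - 1) c hs hc hcos).const_mul _)).const_mul _)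
    ?_
  · rw [h, wh]
    simp [wS, Complex.ofReal_cpow hc.le]
  · obtain ⟨K, hK, h⟩ := wh_bound' δ q c c hs hc hcos
    refine squeeze_zero_norm' (a := fun r => K * Real.exp (-(-(Real.cos δ / 2)) * r)) ?_ ?_
    · filter_upwards [Filter.eventually_ge_atTop 0] with r hr using h c r le_rfl le_rfl hr
    · rw [← mul_zero K]
      refine Filter.Tendsto.const_mul K (Real.tendsto_exp_atBot.comp ?_)
      exact Filter.tendsto_id.const_mul_atTop_of_neg (by linarith)

/-- The contour integral. -/
noncomputable def wJ (δ q c : ℝ) : ℂ :=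
  ∫ r in Set.Ioi (0 : ℝ), Complex.exp (δ * Complex.I) * wh δ q c r

lemma wJ_rec (δ q c : ℝ) (hs : 0 < Real.sin δ) (hc : 0 < c) (hcos : Real.cos δ < 0) :
    (wJ δ q c).im = - q * (wJ δ (q - 1) c).im := by
  have h := wh_ftc δ q c hs hc hcos
  have h2 : wJ δ q c + q * wJ δ (q - 1) c = -((Real.exp c * c ^ q : ℝ) : ℂ) := by
    rw [← h, wJ, wJ, ← integral_const_mul, ← integral_add]
    · congr 1; ext r; ring
    · exact (wh_integrable δ q c hs hc hcos).const_mul _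
    · exact ((wh_integrable δ (q - 1) c hs hc hcos).const_mul _).const_mul _
  have h3 := congrArg Complex.im h2
  rw [Complex.add_im, Complex.im_ofReal_mul, Complex.neg_im, Complex.ofReal_im] at h3
  linarith

lemma wJ_deriv (δ q c : ℝ) (hs : 0 < Real.sin δ) (hc : 0 < c) (hcos : Real.cos δ < 0) :
    HasDerivAt (fun c => wJ δ q c) (-((Real.exp c * c ^ q : ℝ) : ℂ)) c := by
  obtain ⟨K, hK, hb⟩ := wh_bound' δ q (c / 2) (c * 2) hs (by positivity) hcos
  obtain ⟨K', hK', hb'⟩ := wh_bound' δ (q - 1) (c / 2) (c * 2) hs (by positivity) hcos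
  rw [← wh_ftc δ q c hs hc hcos]
  refine (hasDerivAt_integral_of_dominated_loc_of_deriv_le
    (F := fun c r => Complex.exp (δ * Complex.I) * wh δ q c r)
    (F' := fun c r => Complex.exp (δ * Complex.I) * (wh δ q c r + q * wh δ (q - 1) c r))
    (bound := fun r => (K + |q| * K') * Real.exp (-(-(Real.cos δ / 2)) * r))
    (s := Set.Icc (c / 2) (c * 2)) (Icc_mem_nhds (by linarith) (by linarith)) ?_ ?_ ?_ ?_ ?_ ?_).2
  · exact Filter.Eventually.of_forall fun c => ((wh_measurable δ q c).const_mul _).aestronglyMeasurable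
  · exact (wh_integrable δ q c hs hc hcos).const_mul _
  · exact (((wh_measurable δ q c).add ((wh_measurable δ (q - 1) c).const_mul _)).const_mul
      _).aestronglyMeasurable
  · filter_upwards [ae_restrict_mem measurableSet_Ioi] with r hr x hx
    rw [norm_mul, Complex.norm_exp_ofReal_mul_I, one_mul]
    refine (norm_add_le _ _).trans ?_
    rw [norm_mul, Complex.norm_real, Real.norm_eq_abs, add_mul, mul_assoc]
    gcongr
    · exact hb x r hx.1 hx.2 (le_of_lt hr)
    · exact hb' x r hx.1 hx.2 (le_of_lt hr)
  · exact wexp_integrable _ _ (by linarith)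
  · filter_upwards [ae_restrict_mem measurableSet_Ioi] with r hr x hx
    have hx0 : 0 < x := by linarith [hx.1]
    exact (wh_deriv_c δ q x r (wS_slit δ x r hs hx0.le (le_of_lt hr) (Or.inl hx0))).const_mul _

lemma wJ_const (δ q c : ℝ) (hq : 0 ≤ q) (hs : 0 < Real.sin δ) (hc : 0 < c) (hcos : Real.cos δ < 0) :
    (wJ δ q c).im = (wJ δ q 0).im := by
  have hcont : ContinuousOn (fun c => wJ δ q c) (Set.Icc 0 c) := by
    obtain ⟨K, hK, hb⟩ := wh_bound δ q c hq hcos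
    refine continuousOn_of_dominated (bound := fun r => K * Real.exp (-(-(Real.cos δ / 2)) * r))
      (fun x _ => ((wh_measurable δ q x).const_mul _).aestronglyMeasurable) ?_
      (wexp_integrable _ _ (by linarith)) ?_
    · intro x hx
      filter_upwards [ae_restrict_mem measurableSet_Ioi] with r hr
      rw [norm_mul, Complex.norm_exp_ofReal_mul_I, one_mul]
      exact hb x r hx.1 hx.2 (le_of_lt hr)
    · filter_upwards [ae_restrict_mem measurableSet_Ioi] with r hr x hx
      exact ((wh_deriv_c δ q x r (wS_slit δ x r hs hx.1 (le_of_lt hr)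
        (Or.inr hr))).const_mul _).continuousAt.continuousWithinAt
  by_contra hne
  obtain ⟨x, hx, h⟩ := exists_hasDerivAt_eq_slope (fun c => (wJ δ q c).im) (fun _ => 0) hc
    (Complex.continuous_im.comp_continuousOn hcont) (fun x hx => by
      have := Complex.imCLM.hasFDerivAt.comp_hasDerivAt x (wJ_deriv δ q x hs hx.1 hcos)
      refine this.congr_deriv ?_
      rw [Complex.imCLM_apply, Complex.neg_im, Complex.ofReal_im, neg_zero])
  rw [eq_comm, div_eq_zero_iff] at h
  rcases h with h | h
  · exact hne (sub_eq_zero.mp h)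
  · linarith

/-- Integrand on a rotated ray from the origin. -/
noncomputable def wG (q δ r : ℝ) : ℂ :=
  ((r ^ q : ℝ) : ℂ) * (Complex.exp (δ * Complex.I * (q + 1)) *
    Complex.exp (r * Complex.exp (δ * Complex.I)))

lemma wG_measurable (q δ : ℝ) : Measurable (fun r : ℝ => wG q δ r) := by
  unfold wG; fun_prop

lemma wG_norm (q δ r : ℝ) (hr : 0 ≤ r) : ‖wG q δ r‖ = r ^ q * Real.exp (Real.cos δ * r) := by
  have h1 : ‖Complex.exp (δ * Complex.I * (q + 1))‖ = 1 := by
    have : (δ * Complex.I * (q + 1) : ℂ) = ((δ * (q + 1) : ℝ) : ℂ) * Complex.I := by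
      push_cast; ring
    rw [this, Complex.norm_exp_ofReal_mul_I]
  rw [wG, norm_mul, norm_mul, h1, one_mul, Complex.norm_exp, Complex.re_ofReal_mul,
    Complex.exp_ofReal_mul_I_re, Complex.norm_real, Real.norm_eq_abs,
    abs_of_nonneg (Real.rpow_nonneg hr q), mul_comm r]

lemma wG_bound (q b : ℝ) (hq : 0 ≤ q) (hb : b < 0) :
    ∃ K : ℝ, 0 < K ∧ ∀ δ r : ℝ, Real.cos δ ≤ b → 0 ≤ r →
      ‖wG q δ r‖ ≤ K * Real.exp (-(-(b / 2)) * r) := by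
  obtain ⟨K, hK, h⟩ := rpow_le_exp q (-(b / 2)) hq (by linarith)
  refine ⟨K, hK, fun δ r hd hr => ?_⟩
  rw [wG_norm q δ r hr]
  calc _ ≤ (K * Real.exp (-(b / 2) * r)) * Real.exp (b * r) := by
        gcongr
        exact h r hr
    _ = _ := by rw [mul_assoc, ← Real.exp_add]; congr 2; ring

/-- The derivative of `wG` in the angle. -/
noncomputable def wG' (q δ r : ℝ) : ℂ :=
  Complex.I * ((q + 1) * wG q δ r + r * Complex.exp (δ * Complex.I) * wG q δ r)

lemma wG_deriv (q δ r : ℝ) : HasDerivAt (fun δ : ℝ => wG q δ r) (wG' q δ r) δ := by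
  have h0 : HasDerivAt (fun δ : ℝ => (δ : ℂ) * Complex.I) Complex.I δ := by
    simpa using (Complex.ofRealCLM.hasDerivAt (x := δ)).mul_const Complex.I
  have h := ((h0.mul_const ((q : ℂ) + 1)).cexp.mul ((h0.cexp.const_mul (r : ℂ)).cexp)).const_mul
    ((r ^ q : ℝ) : ℂ)
  refine h.congr_deriv ?_
  simp only [wG', wG]
  ring

lemma wG'_bound (q b : ℝ) (hq : 0 ≤ q) (hb : b < 0) :
    ∃ K : ℝ, 0 < K ∧ ∀ δ r : ℝ, Real.cos δ ≤ b → 0 < r →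
      ‖wG' q δ r‖ ≤ K * Real.exp (-(-(b / 2)) * r) := by
  obtain ⟨K, hK, h⟩ := wG_bound q b hq hb
  obtain ⟨K', hK', h'⟩ := wG_bound (q + 1) b (by linarith) hb
  refine ⟨(q + 1) * K + K', by positivity, fun δ r hd hr => ?_⟩
  rw [wG', norm_mul, Complex.norm_I, one_mul]
  refine (norm_add_le _ _).trans ?_
  have e1 : ‖((q : ℂ) + 1) * wG q δ r‖ = (q + 1) * ‖wG q δ r‖ := by
    rw [norm_mul]; congr 1
    have : ((q : ℂ) + 1) = ((q + 1 : ℝ) : ℂ) := by push_cast; ring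
    rw [this, Complex.norm_real, Real.norm_eq_abs, abs_of_nonneg (by linarith)]
  have e2 : ‖(r : ℂ) * Complex.exp (δ * Complex.I) * wG q δ r‖ = ‖wG (q + 1) δ r‖ := by
    rw [norm_mul, norm_mul, Complex.norm_exp_ofReal_mul_I, Complex.norm_real, Real.norm_eq_abs,
      abs_of_pos hr, wG_norm _ _ _ hr.le, wG_norm _ _ _ hr.le, Real.rpow_add_one hr.ne']
    ring
  rw [e1, e2, add_mul ((q + 1) * K), mul_assoc]
  gcongr
  · exact h δ r hd hr.le
  · exact h' δ r hd hr.le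

lemma wG'_integral (q δ : ℝ) (hq : 0 ≤ q) (hb : Real.cos δ < 0) :
    ∫ r in Set.Ioi (0 : ℝ), wG' q δ r = 0 := by
  obtain ⟨K, hK, hK1⟩ := wG'_bound q _ hq hb
  obtain ⟨K', hK', hK1'⟩ := wG_bound (q + 1) _ (by linarith) hb
  set A : ℂ := Complex.I * Complex.exp (δ * Complex.I * (q + 1)) with hA
  have h := integral_Ioi_of_hasDerivAt_of_tendsto
    (f := fun r : ℝ => ((r ^ (q + 1) : ℝ) : ℂ) * (A * Complex.exp (r * Complex.exp (δ * Complex.I))))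
    (a := 0) (m := 0) (f' := fun r => wG' q δ r) ?_ ?_ ?_ ?_
  · rw [h, Real.zero_rpow (by linarith)]; simp
  · apply Continuous.continuousWithinAt
    have : Continuous (fun r : ℝ => r ^ (q + 1)) := Real.continuous_rpow_const (by linarith)
    fun_prop
  · intro r hr
    have hr : 0 < r := hr
    have h1 : HasDerivAt (fun r : ℝ => ((r ^ (q + 1) : ℝ) : ℂ)) (((q + 1) * r ^ q : ℝ) : ℂ) r := by
      have := (Real.hasDerivAt_rpow_const (x := r) (p := q + 1) (Or.inl hr.ne')).ofReal_comp
      simpa using this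
    have h2 : HasDerivAt (fun r : ℝ => (r : ℂ) * Complex.exp (δ * Complex.I))
        (Complex.exp (δ * Complex.I)) r := by
      simpa using (Complex.ofRealCLM.hasDerivAt (x := r)).mul_const (Complex.exp (δ * Complex.I))
    refine (h1.mul (h2.cexp.const_mul A)).congr_deriv ?_
    rw [wG', wG, hA, Real.rpow_add_one hr.ne']
    push_cast
    ring
  · refine integrable_of_bound K _ (by linarith) ?_ (fun r hr => hK1 δ r le_rfl hr)
    have := wG_measurable q δ
    apply Measurable.aestronglyMeasurable
    unfold wG'
    fun_prop
  · refine squeeze_zero_norm' (a := fun r => K' * Real.exp (-(-(Real.cos δ / 2)) * r)) ?_ ?_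
    · filter_upwards [Filter.eventually_ge_atTop 0] with r hr
      have := hK1' δ r le_rfl hr
      refine le_trans (le_of_eq ?_) this
      have h1 : ‖A‖ = 1 := by
        rw [hA, norm_mul, Complex.norm_I, one_mul]
        have : (δ * Complex.I * (q + 1) : ℂ) = ((δ * (q + 1) : ℝ) : ℂ) * Complex.I := by
          push_cast; ring
        rw [this, Complex.norm_exp_ofReal_mul_I]
      rw [wG_norm _ _ _ hr, norm_mul, norm_mul, h1, one_mul, Complex.norm_exp, Complex.re_ofReal_mul,
        Complex.exp_ofReal_mul_I_re, Complex.norm_real, Real.norm_eq_abs,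
        abs_of_nonneg (Real.rpow_nonneg hr _), mul_comm r]
    · rw [← mul_zero K']
      refine Filter.Tendsto.const_mul K' (Real.tendsto_exp_atBot.comp ?_)
      exact Filter.tendsto_id.const_mul_atTop_of_neg (by linarith)

lemma wG_int_deriv (q δ : ℝ) (hq : 0 ≤ q) (hb : Real.cos δ < 0) :
    HasDerivAt (fun δ : ℝ => ∫ r in Set.Ioi (0 : ℝ), wG q δ r) 0 δ := by
  have hb2 : Real.cos δ / 2 < 0 := by linarith
  obtain ⟨K, hK, hK1⟩ := wG'_bound q _ hq hb2
  obtain ⟨K', hK', hK1'⟩ := wG_bound q _ hq hb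
  have hn : {x : ℝ | Real.cos x < Real.cos δ / 2} ∈ nhds δ :=
    (isOpen_lt Real.continuous_cos continuous_const).mem_nhds
      (show Real.cos δ < Real.cos δ / 2 by linarith)
  rw [← wG'_integral q δ hq hb]
  refine (hasDerivAt_integral_of_dominated_loc_of_deriv_le
    (F := fun δ r => wG q δ r) (F' := fun δ r => wG' q δ r)
    (bound := fun r => K * Real.exp (-(-(Real.cos δ / 2 / 2)) * r)) hn ?_ ?_ ?_ ?_ ?_ ?_).2
  · exact Filter.Eventually.of_forall fun δ => (wG_measurable q δ).aestronglyMeasurable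
  · exact integrable_of_bound K' _ (by linarith) (wG_measurable q δ).aestronglyMeasurable
      (fun r hr => hK1' δ r le_rfl hr.le)
  · have := wG_measurable q δ
    apply Measurable.aestronglyMeasurable
    unfold wG'
    fun_prop
  · filter_upwards [ae_restrict_mem measurableSet_Ioi] with r hr x hx
    exact hK1 x r (le_of_lt hx) hr
  · exact wexp_integrable _ _ (by linarith)
  · exact Filter.Eventually.of_forall fun r x _ => wG_deriv q x r

lemma wJ_zero (δ q : ℝ) (hq : 0 ≤ q) (h0 : 0 < δ) (hpi : δ < Real.pi) (hcos : Real.cos δ < 0) :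
    (wJ δ q 0).im = Real.pi / Real.Gamma (-q) := by
  have h1 : wJ δ q 0 = ∫ r in Set.Ioi (0 : ℝ), wG q δ r := by
    refine setIntegral_congr_fun measurableSet_Ioi (fun r hr => ?_)
    have hr : 0 < r := hr
    have hS : wS δ 0 r = r * Complex.exp (δ * Complex.I) := by simp [wS]
    have hne : (r * Complex.exp (δ * Complex.I) : ℂ) ≠ 0 :=
      mul_ne_zero (by exact_mod_cast hr.ne') (Complex.exp_ne_zero _)
    have hlog : Complex.log (r * Complex.exp (δ * Complex.I)) = Real.log r + δ * Complex.I := by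
      rw [Complex.log_ofReal_mul hr (Complex.exp_ne_zero _), Complex.log_exp] <;>
        simp <;> linarith [Real.pi_pos]
    simp only [wh, wG, hS]
    rw [Complex.cpow_def_of_ne_zero hne, hlog, Real.rpow_def_of_pos hr]
    push_cast
    simp only [← Complex.exp_add]
    congr 1; ring
  have h2 : ∫ r in Set.Ioi (0 : ℝ), wG q δ r = ∫ r in Set.Ioi (0 : ℝ), wG q Real.pi r := by
    have hd : ∀ x ∈ Set.Icc δ Real.pi, HasDerivAt (fun δ : ℝ => ∫ r in Set.Ioi (0 : ℝ), wG q δ r) 0 x := by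
      intro x hx
      refine wG_int_deriv q x hq (lt_of_le_of_lt ?_ hcos)
      exact Real.cos_le_cos_of_nonneg_of_le_pi h0.le hx.2 hx.1
    refine (constant_of_has_deriv_right_zero (a := δ) (b := Real.pi)
      (fun x hx => (hd x hx).continuousAt.continuousWithinAt)
      (fun x hx => (hd x ⟨hx.1, hx.2.le⟩).hasDerivWithinAt) Real.pi ⟨hpi.le, le_rfl⟩).symm
  have h3 : ∫ r in Set.Ioi (0 : ℝ), wG q Real.pi r
      = ((Real.Gamma (q + 1) : ℝ) : ℂ) * Complex.exp (((Real.pi * (q + 1) : ℝ) : ℂ) * Complex.I) := by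
    rw [Real.Gamma_eq_integral (by linarith), ← integral_complex_ofReal, ← integral_mul_const]
    refine setIntegral_congr_fun measurableSet_Ioi (fun r hr => ?_)
    simp only [wG, Complex.exp_pi_mul_I]
    push_cast
    rw [mul_neg_one, show (Real.pi : ℂ) * Complex.I * (q + 1) = Real.pi * (q + 1) * Complex.I by ring]
    simp
    ring
  rw [h1, h2, h3, Complex.im_ofReal_mul, Complex.exp_ofReal_mul_I_im]
  have h4 := Real.Gamma_mul_Gamma_one_sub (-q)
  have h5 : 0 < Real.Gamma (q + 1) := Real.Gamma_pos_of_pos (by linarith)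
  rw [show 1 - -q = q + 1 by ring] at h4
  rw [show Real.pi * (q + 1) = Real.pi - Real.pi * (-q) by ring, Real.sin_pi_sub]
  rw [← eq_div_iff h5.ne'] at h4
  rw [h4]
  by_cases hs : Real.sin (Real.pi * -q) = 0
  · rw [hs]; simp
  · have := Real.pi_pos.ne'
    field_simp

lemma wJ_eq (δ c : ℝ) (h0 : 0 < δ) (hpi : δ < Real.pi) (hcos : Real.cos δ < 0) (hc : 0 < c) (q : ℝ) :
    (wJ δ q c).im = Real.pi / Real.Gamma (-q) := by
  have hs : 0 < Real.sin δ := Real.sin_pos_of_pos_of_lt_pi h0 hpi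
  have hA : ∀ q, 0 ≤ q → (wJ δ q c).im = Real.pi / Real.Gamma (-q) := fun q hq => by
    rw [wJ_const δ q c hq hs hc hcos, wJ_zero δ q hq h0 hpi hcos]
  -- downward step
  have hstep : ∀ q, q ≠ -1 → (wJ δ (q + 1) c).im = Real.pi / Real.Gamma (-(q + 1)) →
      (wJ δ q c).im = Real.pi / Real.Gamma (-q) := by
    intro q hq h
    have hr := wJ_rec δ (q + 1) c hs hc hcos
    rw [h, show q + 1 - 1 = q by ring] at hr
    have hne : -(q + 1) ≠ 0 := fun h => hq (by linarith)
    have hg := Real.Gamma_add_one hne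
    rw [show -(q + 1) + 1 = -q by ring] at hg
    rw [hg, ← div_div, div_right_comm, hr, mul_div_cancel_left₀ _ hne]
  have hB : ∀ q, -1 < q → (wJ δ q c).im = Real.pi / Real.Gamma (-q) := fun q hq =>
    hstep q hq.ne' (hA _ (by linarith))
  have hC : (wJ δ (-1) c).im = Real.pi / Real.Gamma (-(-1)) := by
    obtain ⟨K, hK, hb⟩ := wh_bound' δ (-1) c c hs hc hcos
    obtain ⟨K', hK', hb'⟩ := wh_bound' δ 0 c c hs hc hcos
    have hev : ∀ᶠ q : ℝ in nhdsWithin (-1) (Set.Ioi (-1)), -1 < q ∧ q < 0 := by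
      filter_upwards [Ioo_mem_nhdsGT (show (-1 : ℝ) < 0 by norm_num)] with q hq using hq
    have hl : Filter.Tendsto (fun q => wJ δ q c) (nhdsWithin (-1) (Set.Ioi (-1)))
        (nhds (wJ δ (-1) c)) := by
      refine tendsto_integral_filter_of_dominated_convergence
        (fun r => (K + K') * Real.exp (-(-(Real.cos δ / 2)) * r)) ?_ ?_
        (wexp_integrable _ _ (by linarith)) ?_
      · exact Filter.Eventually.of_forall fun q =>
          ((wh_measurable δ q c).const_mul _).aestronglyMeasurable
      · filter_upwards [hev] with q hq
        filter_upwards [ae_restrict_mem measurableSet_Ioi] with r hr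
        have hr : 0 < r := hr
        rw [norm_mul, Complex.norm_exp_ofReal_mul_I, one_mul, add_mul]
        refine le_trans ?_ (add_le_add (hb c r le_rfl le_rfl hr.le) (hb' c r le_rfl le_rfl hr.le))
        simp only [wh, norm_mul, Complex.norm_cpow_real]
        rw [← mul_add]
        gcongr
        have hpos : 0 < ‖wS δ c r‖ := lt_of_lt_of_le (by positivity) (wS_norm_ge δ c r hs.le hc.le)
        rcases le_total 1 ‖wS δ c r‖ with h | h
        · have := Real.rpow_le_rpow_of_exponent_le h hq.2.le
          have := Real.rpow_nonneg hpos.le (-1)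
          linarith
        · exact (Real.rpow_le_rpow_of_exponent_ge hpos h hq.1.le).trans
            (le_add_of_nonneg_right (Real.rpow_nonneg hpos.le 0))
      · filter_upwards [ae_restrict_mem measurableSet_Ioi] with r hr
        have hr : 0 < r := hr
        have hsl := wS_slit δ c r hs hc.le hr.le (Or.inl hc)
        have hne := Complex.slitPlane_ne_zero hsl
        have hcont : Continuous (fun q : ℝ => Complex.exp (δ * Complex.I) * wh δ q c r) := by
          unfold wh
          refine continuous_const.mul (continuous_const.mul ?_)
          exact Continuous.const_cpow Complex.continuous_ofReal (Or.inl hne)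
        exact (hcont.tendsto (-1)).mono_left nhdsWithin_le_nhds
    have hl2 := (Complex.continuous_im.tendsto _).comp hl
    have hG : ContinuousAt (fun q : ℝ => Real.pi / Real.Gamma (-q)) (-1) := by
      have hd : ContinuousAt Real.Gamma (-(-1)) := by
        refine (Real.differentiableAt_Gamma (fun m => ?_)).continuousAt
        have : (0 : ℝ) ≤ m := m.cast_nonneg
        intro h; linarith
      have hd2 : ContinuousAt (fun q : ℝ => Real.Gamma (-q)) (-1) :=
        ContinuousAt.comp (f := fun q : ℝ => -q) hd continuous_neg.continuousAt
      exact continuousAt_const.div hd2 (by simp [Real.Gamma_one])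
    refine tendsto_nhds_unique hl2 ((hG.tendsto.mono_left nhdsWithin_le_nhds).congr' ?_)
    filter_upwards [hev] with q hq using (hB q hq.1).symm
  have hD : ∀ n : ℕ, ∀ q : ℝ, -(n : ℝ) ≤ q → (wJ δ q c).im = Real.pi / Real.Gamma (-q) := by
    intro n
    induction n with
    | zero => intro q hq; exact hA q (by simpa using hq)
    | succ n ih =>
      intro q hq
      by_cases h : q = -1
      · rw [h]; exact hC
      · refine hstep q h (ih _ ?_)
        push_cast at hq; linarith
  obtain ⟨n, hn⟩ := exists_nat_ge (-q)
  exact hD n q (by linarith)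
lemma sublinear_bound (α X ε : ℝ) (hα : 0 < α) (hα1 : α < 1) (hX : 0 ≤ X) (hε : 0 < ε) :
    ∃ C : ℝ, ∀ y : ℝ, 0 ≤ y → X * y ^ α ≤ ε * y + C := by
  have h1 : Filter.Tendsto (fun L : ℝ => X * L ^ (-(1 - α))) Filter.atTop (nhds (X * 0)) :=
    (tendsto_rpow_neg_atTop (by linarith)).const_mul X
  rw [mul_zero] at h1
  obtain ⟨L, hL, hL0⟩ := ((h1.eventually_lt_const hε).and (Filter.eventually_gt_atTop 0)).exists
  refine ⟨X * L ^ α, fun y hy => ?_⟩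
  rcases le_total y L with h | h
  · have : X * y ^ α ≤ X * L ^ α := by gcongr
    nlinarith
  · have hy0 : 0 < y := hL0.trans_le h
    have e : y ^ α = y * y ^ (-(1 - α)) := by
      rw [← Real.rpow_one_add' hy (by linarith)]; congr 1; ring
    have h2 : y ^ (-(1 - α)) ≤ L ^ (-(1 - α)) :=
      Real.rpow_le_rpow_of_nonpos hL0 h (by linarith)
    have h3 : X * y ^ (-(1 - α)) ≤ ε := (mul_le_mul_of_nonneg_left h2 hX).trans hL.le
    have h4 : 0 ≤ X * L ^ α := by positivity
    rw [e]
    nlinarith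

lemma wh_shift (δ q α c r : ℝ) (n : ℕ) (hne : wS δ c r ≠ 0) :
    wh δ (q + α * n) c r = wh δ q c r * ((wS δ c r) ^ (α : ℂ)) ^ n := by
  rw [wh, wh, mul_assoc, ← Complex.cpow_mul_nat, ← Complex.cpow_add _ _ hne]
  push_cast
  rfl

lemma wright_rep (δ c α β x : ℝ) (h0 : 0 < δ) (hpi : δ < Real.pi) (hcos : Real.cos δ < 0)
    (hc : 0 < c) (hα : 0 < α) (hα1 : α < 1) :
    wright (-α) β (-x) = (1 / Real.pi) * (∫ r in Set.Ioi (0 : ℝ), Complex.exp (δ * Complex.I) *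
      (wh δ (-β) c r * Complex.exp (-(x : ℂ) * (wS δ c r) ^ (α : ℂ)))).im := by
  have hs : 0 < Real.sin δ := Real.sin_pos_of_pos_of_lt_pi h0 hpi
  have hne : ∀ r : ℝ, 0 < r → wS δ c r ≠ 0 := fun r hr =>
    Complex.slitPlane_ne_zero (wS_slit δ c r hs hc.le hr.le (Or.inl hc))
  have hS := wS_measurable δ c
  have hexp : ∀ y : ℝ, HasSum (fun n : ℕ => y ^ n / (n.factorial : ℝ)) (Real.exp y) := by
    intro y
    rw [Real.exp_eq_exp_ℝ]
    exact NormedSpace.expSeries_div_hasSum_exp y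
  have hcexp : ∀ y : ℂ, HasSum (fun n : ℕ => y ^ n / (n.factorial : ℂ)) (Complex.exp y) := by
    intro y
    rw [Complex.exp_eq_exp_ℂ]
    exact NormedSpace.expSeries_div_hasSum_exp y
  have key : HasSum (fun n : ℕ => ∫ r in Set.Ioi (0 : ℝ),
      ((((-x) ^ n / (n.factorial : ℝ) : ℝ)) : ℂ) * (Complex.exp (δ * Complex.I) * wh δ (-β + α * n) c r))
      (∫ r in Set.Ioi (0 : ℝ), Complex.exp (δ * Complex.I) *
      (wh δ (-β) c r * Complex.exp (-(x : ℂ) * (wS δ c r) ^ (α : ℂ)))) := by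
    refine hasSum_integral_of_dominated_convergence
      (fun n r => ‖wh δ (-β) c r‖ * ((|x| * ‖wS δ c r‖ ^ α) ^ n / (n.factorial : ℝ))) ?_ ?_ ?_ ?_ ?_
    · intro n
      exact (((wh_measurable δ _ c).const_mul _).const_mul _).aestronglyMeasurable
    · intro n
      filter_upwards [ae_restrict_mem measurableSet_Ioi] with r hr
      rw [wh_shift δ (-β) α c r n (hne r hr), norm_mul, norm_mul, norm_mul, norm_pow,
        Complex.norm_exp_ofReal_mul_I, one_mul, Complex.norm_cpow_real, Complex.norm_real, norm_div,
        norm_pow, norm_neg, Real.norm_eq_abs, Real.norm_natCast, mul_pow]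
      apply le_of_eq
      ring
    · exact Filter.Eventually.of_forall fun r => ((hexp _).mul_left _).summable
    · have e : (fun r => ∑' n : ℕ, ‖wh δ (-β) c r‖ * ((|x| * ‖wS δ c r‖ ^ α) ^ n / (n.factorial : ℝ)))
          = fun r => ‖wh δ (-β) c r‖ * Real.exp (|x| * ‖wS δ c r‖ ^ α) := by
        ext r; exact ((hexp _).mul_left _).tsum_eq
      rw [e]
      obtain ⟨K, hK, hb⟩ := wh_bound' δ (-β) c c hs hc hcos
      obtain ⟨C, hC⟩ := sublinear_bound α |x| (-(Real.cos δ / 4)) hα hα1 (abs_nonneg x) (by linarith)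
      refine integrable_of_bound (K * Real.exp (-(Real.cos δ / 4) * c + C)) (-(Real.cos δ / 4))
        (by linarith) ?_ ?_
      · have := wh_measurable δ (-β) c
        apply Measurable.aestronglyMeasurable
        fun_prop
      · intro r hr
        rw [norm_mul, norm_norm, Real.norm_eq_abs, Real.abs_exp]
        have h1 := hb c r le_rfl le_rfl hr.le
        have h2 := hC _ (norm_nonneg (wS δ c r))
        have h3 := wS_norm_le δ c r hc.le hr.le
        calc _ ≤ (K * Real.exp (-(-(Real.cos δ / 2)) * r)) *
              Real.exp (-(Real.cos δ / 4) * (c + r) + C) := by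
              gcongr
              refine h2.trans ?_
              have : 0 < -(Real.cos δ / 4) := by linarith
              gcongr
          _ = _ := by
              rw [mul_assoc, mul_assoc, ← Real.exp_add, ← Real.exp_add]; congr 2; ring
    · filter_upwards [ae_restrict_mem measurableSet_Ioi] with r hr
      have h := ((hcexp (-(x : ℂ) * (wS δ c r) ^ (α : ℂ))).mul_left
        (wh δ (-β) c r)).mul_left (Complex.exp (δ * Complex.I))
      refine h.congr_fun ?_
      intro n
      rw [wh_shift δ (-β) α c r n (hne r hr), mul_pow]
      push_cast
      ring
  have key2 := (Complex.hasSum_im key).mul_left (1 / Real.pi)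
  rw [← key2.tsum_eq, wright]
  congr 1
  ext n
  rw [integral_const_mul, Complex.im_ofReal_mul]
  change _ = 1 / Real.pi * (_ * (wJ δ (-β + α * n) c).im)
  rw [wJ_eq δ c h0 hpi hcos hc, show -(-β + α * n) = β + -α * n by ring]
  have := Real.pi_pos.ne'
  rw [← div_div]
  field_simp

lemma mittagLeffler_rep (δ c α β t : ℝ) (h0 : 0 < δ) (hpi : δ < Real.pi) (hcos : Real.cos δ < 0)
    (hc : 0 < c) (hα : 0 < α) (ht : 0 < t) (hct : (c * Real.sin δ) ^ α = t + 1) :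
    mittagLeffler α (β + α) (-t) = (1 / Real.pi) * (∫ r in Set.Ioi (0 : ℝ),
      Complex.exp (δ * Complex.I) * (wh δ (-β) c r * ((t : ℂ) + (wS δ c r) ^ (α : ℂ))⁻¹)).im := by
  have hs : 0 < Real.sin δ := Real.sin_pos_of_pos_of_lt_pi h0 hpi
  have hne : ∀ r : ℝ, 0 < r → wS δ c r ≠ 0 := fun r hr =>
    Complex.slitPlane_ne_zero (wS_slit δ c r hs hc.le hr.le (Or.inl hc))
  have hS := wS_measurable δ c
  have hlow : ∀ r : ℝ, t + 1 ≤ ‖(wS δ c r) ^ (α : ℂ)‖ := by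
    intro r
    rw [Complex.norm_cpow_real, ← hct]
    have := wS_norm_ge δ c r hs.le hc.le
    gcongr
  have hshift : ∀ (r : ℝ) (n : ℕ), 0 < r → wh δ (-(β + α + α * n)) c r =
      wh δ (-β) c r * (((wS δ c r) ^ (α : ℂ))⁻¹ * (((wS δ c r) ^ (α : ℂ))⁻¹) ^ n) := by
    intro r n hr
    have h := wh_shift δ (-(β + α + α * n)) α c r (n + 1) (hne r hr)
    rw [show -(β + α + α * n) + α * ((n + 1 : ℕ) : ℝ) = -β by push_cast; ring] at h
    have hn0 : (wS δ c r) ^ (α : ℂ) ≠ 0 := by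
      rw [← norm_pos_iff]; linarith [hlow r]
    rw [h, mul_assoc, ← pow_succ', ← mul_pow, mul_inv_cancel₀ hn0, one_pow, mul_one]
  have hq0 : 0 ≤ t / (t + 1) := by positivity
  have hq1 : t / (t + 1) < 1 := by rw [div_lt_one (by positivity)]; linarith
  have key : HasSum (fun n : ℕ => ∫ r in Set.Ioi (0 : ℝ),
      ((((-t) ^ n : ℝ)) : ℂ) * (Complex.exp (δ * Complex.I) * wh δ (-(β + α + α * n)) c r))
      (∫ r in Set.Ioi (0 : ℝ), Complex.exp (δ * Complex.I) *
        (wh δ (-β) c r * ((t : ℂ) + (wS δ c r) ^ (α : ℂ))⁻¹)) := by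
    refine hasSum_integral_of_dominated_convergence
      (fun n r => ‖wh δ (-β) c r‖ * (t / (t + 1)) ^ n) ?_ ?_ ?_ ?_ ?_
    · intro n
      exact (((wh_measurable δ _ c).const_mul _).const_mul _).aestronglyMeasurable
    · intro n
      filter_upwards [ae_restrict_mem measurableSet_Ioi] with r hr
      rw [hshift r n hr]
      simp only [norm_mul, norm_pow, norm_inv, Complex.norm_exp_ofReal_mul_I, one_mul,
        Complex.norm_real, norm_neg, Real.norm_eq_abs, abs_of_pos ht, Complex.ofReal_pow,
        Complex.ofReal_neg]
      have hl := hlow r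
      set N := ‖(wS δ c r) ^ (α : ℂ)‖
      have hN : N⁻¹ ≤ 1 := inv_le_one_of_one_le₀ (by linarith)
      have hN0 : 0 ≤ N⁻¹ := inv_nonneg.mpr (by linarith)
      have hN2 : N⁻¹ ≤ (t + 1)⁻¹ := inv_anti₀ (by linarith) hl
      calc _ = ‖wh δ (-β) c r‖ * (N⁻¹ * (t * N⁻¹) ^ n) := by rw [mul_pow]; ring
        _ ≤ ‖wh δ (-β) c r‖ * (1 * (t * (t + 1)⁻¹) ^ n) := by gcongr
        _ = _ := by rw [one_mul, div_eq_mul_inv]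
    · exact Filter.Eventually.of_forall fun r => (summable_geometric_of_lt_one hq0 hq1).mul_left _
    · have e : (fun r => ∑' n : ℕ, ‖wh δ (-β) c r‖ * (t / (t + 1)) ^ n)
          = fun r => ‖wh δ (-β) c r‖ * (1 - t / (t + 1))⁻¹ := by
        ext r; rw [tsum_mul_left, tsum_geometric_of_lt_one hq0 hq1]
      rw [e]
      exact (wh_integrable δ (-β) c hs hc hcos).norm.mul_const _
    · filter_upwards [ae_restrict_mem measurableSet_Ioi] with r hr
      have hl := hlow r
      have hn0 : (wS δ c r) ^ (α : ℂ) ≠ 0 := by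
        rw [← norm_pos_iff]; linarith
      have hlt : ‖-(t : ℂ) * ((wS δ c r) ^ (α : ℂ))⁻¹‖ < 1 := by
        rw [norm_mul, norm_neg, Complex.norm_real, Real.norm_eq_abs, abs_of_pos ht, norm_inv,
          ← div_eq_mul_inv, div_lt_one (by linarith)]
        linarith
      have h := (hasSum_geometric_of_norm_lt_one hlt).mul_left
        (Complex.exp (δ * Complex.I) * (wh δ (-β) c r * ((wS δ c r) ^ (α : ℂ))⁻¹))
      have e : Complex.exp (δ * Complex.I) * (wh δ (-β) c r * ((wS δ c r) ^ (α : ℂ))⁻¹) *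
          (1 - -(t : ℂ) * ((wS δ c r) ^ (α : ℂ))⁻¹)⁻¹ = Complex.exp (δ * Complex.I) *
        (wh δ (-β) c r * ((t : ℂ) + (wS δ c r) ^ (α : ℂ))⁻¹) := by
        rw [mul_assoc, mul_assoc, ← mul_inv]
        congr 3
        rw [mul_sub, mul_one, mul_left_comm, mul_inv_cancel₀ hn0]
        ring
      rw [e] at h
      refine h.congr_fun ?_
      intro n
      rw [hshift r n hr, mul_pow]
      push_cast
      ring
  have key2 := (Complex.hasSum_im key).mul_left (1 / Real.pi)
  rw [← key2.tsum_eq, mittagLeffler]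
  congr 1
  ext n
  rw [integral_const_mul, Complex.im_ofReal_mul]
  change _ = 1 / Real.pi * (_ * (wJ δ (-(β + α + α * n)) c).im)
  rw [wJ_eq δ c h0 hpi hcos hc, neg_neg]
  have := Real.pi_pos.ne'
  field_simp

theorem wright_laplace (ρ β t : ℝ) (hρ : ρ ∈ Set.Ioo (-1 : ℝ) 0) (ht : 0 < t) :
    IntegrableOn (fun x => wright ρ β (-x) * Real.exp (-(x * t))) (Set.Ioi 0) ∧
    ∫ x in Set.Ioi 0, wright ρ β (-x) * Real.exp (-(x * t)) =
      mittagLeffler (-ρ) (β - ρ) (-t) := by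
  obtain ⟨α, rfl⟩ : ∃ α, ρ = -α := ⟨-ρ, by ring⟩
  have hα : 0 < α := by linarith [hρ.2]
  have hα1 : α < 1 := by linarith [hρ.1]
  rw [neg_neg, sub_neg_eq_add]
  have hpp := Real.pi_pos
  obtain ⟨δ, hδ⟩ : ∃ δ, δ = Real.pi / (1 + α) := ⟨_, rfl⟩
  have hδα : δ * (1 + α) = Real.pi := by rw [hδ]; field_simp
  have h0 : 0 < δ := by rw [hδ]; positivity
  have hpi : δ < Real.pi := by nlinarith
  have hpi2 : Real.pi / 2 < δ := by nlinarith
  have hαδ : δ * α ≤ Real.pi / 2 := by nlinarith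
  have hcos : Real.cos δ < 0 := Real.cos_neg_of_pi_div_two_lt_of_lt hpi2 (by linarith)
  have hs : 0 < Real.sin δ := Real.sin_pos_of_pos_of_lt_pi h0 hpi
  obtain ⟨c, hcdef⟩ : ∃ c, c = (t + 1) ^ (1 / α) / Real.sin δ := ⟨_, rfl⟩
  have hc : 0 < c := by rw [hcdef]; positivity
  have hct : (c * Real.sin δ) ^ α = t + 1 := by
    rw [hcdef, div_mul_cancel₀ _ hs.ne', ← Real.rpow_mul (by linarith), one_div_mul_cancel hα.ne',
      Real.rpow_one]
  set f : ℝ → ℝ → ℂ := fun x r => Complex.exp (-(x * t : ℝ)) * (Complex.exp (δ * Complex.I) *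
      (wh δ (-β) c r * Complex.exp (-(x : ℂ) * (wS δ c r) ^ (α : ℂ)))) with hf
  have hint : Integrable (Function.uncurry f)
      ((volume.restrict (Set.Ioi (0 : ℝ))).prod (volume.restrict (Set.Ioi (0 : ℝ)))) := by
    have hb : Integrable (fun z : ℝ × ℝ => Real.exp (-t * z.1) * ‖wh δ (-β) c z.2‖)
      ((volume.restrict (Set.Ioi (0 : ℝ))).prod (volume.restrict (Set.Ioi (0 : ℝ)))) :=
      Integrable.mul_prod (exp_neg_integrableOn_Ioi 0 ht) (wh_integrable δ (-β) c hs hc hcos).norm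
    refine hb.mono' ?_ ?_
    · have h1 : Measurable (fun z : ℝ × ℝ => wh δ (-β) c z.2) := (wh_measurable δ (-β) c).comp measurable_snd
      have h2 : Measurable (fun z : ℝ × ℝ => wS δ c z.2) := (wS_measurable δ c).comp measurable_snd
      apply Measurable.aestronglyMeasurable
      simp only [hf, Function.uncurry_def]
      fun_prop
    · rw [Measure.prod_restrict]
      filter_upwards [ae_restrict_mem (measurableSet_Ioi.prod measurableSet_Ioi)] with z hz
      have hx : 0 < z.1 := hz.1
      have hr : 0 < z.2 := hz.2
      simp only [hf, Function.uncurry_def, norm_mul, Complex.norm_exp_ofReal_mul_I, one_mul]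
      have e1 : ‖Complex.exp (-((z.1 * t : ℝ) : ℂ))‖ = Real.exp (-t * z.1) := by
        rw [← Complex.ofReal_neg, Complex.norm_exp_ofReal]; congr 1; ring
      have e2 : ‖Complex.exp (-(z.1 : ℂ) * (wS δ c z.2) ^ (α : ℂ))‖ ≤ 1 := by
        rw [Complex.norm_exp, ← Complex.ofReal_neg, Complex.re_ofReal_mul, Real.exp_le_one_iff]
        have := wS_rpow_re_nonneg δ c z.2 α h0 hpi hc hr.le hα hαδ
        nlinarith
      rw [e1]
      gcongr
      exact mul_le_of_le_one_right (norm_nonneg _) e2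
  have hw : ∀ x : ℝ, wright (-α) β (-x) * Real.exp (-(x * t)) =
      (1 / Real.pi) * (∫ r in Set.Ioi (0 : ℝ), f x r).im := by
    intro x
    rw [wright_rep δ c α β x h0 hpi hcos hc hα hα1]
    simp only [hf]
    rw [integral_const_mul (Complex.exp (-((x * t : ℝ) : ℂ))), ← Complex.ofReal_neg (x * t),
      ← Complex.ofReal_exp, Complex.im_ofReal_mul]
    ring
  have hI : Integrable (fun x => ∫ r in Set.Ioi (0 : ℝ), f x r) (volume.restrict (Set.Ioi (0 : ℝ))) :=
    hint.integral_prod_left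
  have hIim : Integrable (fun x => (∫ r in Set.Ioi (0 : ℝ), f x r).im)
      (volume.restrict (Set.Ioi (0 : ℝ))) := hI.im
  simp only [hw]
  refine ⟨hIim.const_mul _, ?_⟩
  rw [integral_const_mul, mittagLeffler_rep δ c α β t h0 hpi hcos hc hα ht hct]
  congr 1
  have him : ∫ x in Set.Ioi (0 : ℝ), (∫ r in Set.Ioi (0 : ℝ), f x r).im
      = (∫ x in Set.Ioi (0 : ℝ), ∫ r in Set.Ioi (0 : ℝ), f x r).im := integral_im hI
  rw [him, integral_integral_swap hint]
  congr 1
  refine setIntegral_congr_fun measurableSet_Ioi (fun r hr => ?_)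
  have hr : 0 < r := hr
  have hre := wS_rpow_re_nonneg δ c r α h0 hpi hc hr.le hα hαδ
  have hneg : (-((t : ℂ) + (wS δ c r) ^ (α : ℂ))).re < 0 := by
    rw [Complex.neg_re, Complex.add_re, Complex.ofReal_re]; linarith
  have h := integral_exp_mul_complex_Ioi hneg 0
  rw [Complex.ofReal_zero, mul_zero, Complex.exp_zero, neg_div_neg_eq, one_div] at h
  change ∫ x in Set.Ioi (0 : ℝ), f x r = _
  rw [← h, ← mul_assoc, ← integral_const_mul]
  congr 1
  ext x
  simp only [hf]
  rw [show (-((t : ℂ) + (wS δ c r) ^ (α : ℂ)) * x) = -(x * t : ℝ) + -(x : ℂ) * (wS δ c r) ^ (α : ℂ) by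
    push_cast; ring, Complex.exp_add]
  ring
end

section
/- For every α ∈ (0,1) and β ≥ 0: φ(-α, β, -x) > 0 for all x > 0, the function x ↦ φ(-α, β, -x) is integrable on (0,∞), and ∫_0^∞ φ(-α, β, -x) dx = 1/Γ(α+β). Consequently x ↦ Γ(α+β)·φ(-α, β, -x) is a probability density on (0,∞). -/
open MeasureTheory

open Filter Topology Set

/-- integrand in logarithmic coordinates -/
noncomputable def wg (α x b : ℝ) (w : ℂ) : ℂ :=
  Complex.exp (Complex.exp w - x * Complex.exp (α * w) + b * w)

lemma wg_differentiable (α x b : ℝ) : Differentiable ℂ (wg α x b) := by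
  unfold wg; fun_prop

lemma wg_continuous (α x b : ℝ) : Continuous (wg α x b) := (wg_differentiable α x b).continuous

lemma wg_norm (α x b ρ θ : ℝ) : ‖wg α x b (ρ + θ * Complex.I)‖ =
    Real.exp (Real.exp ρ * Real.cos θ - x * (Real.exp (α * ρ) * Real.cos (α * θ)) + b * ρ) := by
  unfold wg
  rw [Complex.norm_exp]
  congr 1
  simp [Complex.exp_re]

lemma wH_exists (α x b : ℝ) : ∃ H : ℂ → ℂ, H 0 = 0 ∧ ∀ w, HasDerivAt H (wg α x b w) w := by
  obtain ⟨H, hH⟩ := (wg_differentiable α x b).isExactOn_univ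
  exact ⟨fun w => H w - H 0, by simp, fun w => (hH w (mem_univ _)).sub_const _⟩

noncomputable def wH (α x b : ℝ) : ℂ → ℂ := (wH_exists α x b).choose

lemma wH_zero (α x b : ℝ) : wH α x b 0 = 0 := (wH_exists α x b).choose_spec.1

lemma wH_deriv (α x b : ℝ) (w : ℂ) : HasDerivAt (wH α x b) (wg α x b w) w :=
  (wH_exists α x b).choose_spec.2 w

lemma wg_real (α x b ρ : ℝ) : (wg α x b ρ).im = 0 := by
  have : wg α x b ρ = ((Real.exp (Real.exp ρ - x * Real.exp (α * ρ) + b * ρ) : ℝ) : ℂ) := by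
    unfold wg; push_cast; rfl
  rw [this, Complex.ofReal_im]

lemma hasDerivAt_hor {H : ℂ → ℂ} {g : ℂ} (θ ρ : ℝ) (h : HasDerivAt H g (ρ + θ * Complex.I)) :
    HasDerivAt (fun r : ℝ => H (r + θ * Complex.I)) g ρ := by
  have h1 : HasDerivAt (fun r : ℝ => (r : ℂ) + θ * Complex.I) 1 ρ :=
    (Complex.ofRealCLM.hasDerivAt (x := ρ)).add_const _
  have h2 := h.comp ρ h1
  rw [mul_one] at h2
  exact h2

lemma hasDerivAt_ver {H : ℂ → ℂ} {g : ℂ} (θ ρ : ℝ) (h : HasDerivAt H g (ρ + θ * Complex.I)) :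
    HasDerivAt (fun t : ℝ => H (ρ + t * Complex.I)) (g * Complex.I) θ := by
  have h1 : HasDerivAt (fun r : ℝ => (ρ : ℂ) + r * Complex.I) Complex.I θ := by
    have := ((Complex.ofRealCLM.hasDerivAt (x := θ)).mul_const Complex.I).const_add (ρ : ℂ)
    simpa using this
  exact h.comp θ h1

lemma hasDerivAt_im {f : ℝ → ℂ} {f' : ℂ} {t : ℝ} (h : HasDerivAt f f' t) :
    HasDerivAt (fun s => (f s).im) f'.im t :=
  (Complex.imCLM.hasFDerivAt.comp_hasDerivAt t h)

lemma wH_real (α x b ρ : ℝ) : (wH α x b ρ).im = 0 := by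
  have h : ∀ r : ℝ, HasDerivAt (fun r : ℝ => (wH α x b r).im) 0 r := by
    intro r
    have := hasDerivAt_im (hasDerivAt_hor 0 r (H := wH α x b) (wH_deriv α x b _))
    simpa [wg_real] using this
  have := is_const_of_deriv_eq_zero (fun r => (h r).differentiableAt) (fun r => (h r).deriv) ρ 0
  simpa [wH_zero] using this

/-- growth -/
lemma growth {α c : ℝ} (x b : ℝ) (hα : α < 1) (hc : 0 < c) :
    Tendsto (fun ρ : ℝ => -c * Real.exp ρ + x * Real.exp (α * ρ) + b * ρ) atTop atBot := by
  have h1 : Tendsto (fun ρ : ℝ => Real.exp (-(1 - α) * ρ)) atTop (𝓝 0) := by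
    apply Real.tendsto_exp_atBot.comp
    exact tendsto_id.const_mul_atTop_of_neg (by linarith)
  have h2 : Tendsto (fun ρ : ℝ => ρ * Real.exp (-ρ)) atTop (𝓝 0) := by
    simpa using Real.tendsto_pow_mul_exp_neg_atTop_nhds_zero 1
  have h3 : Tendsto (fun ρ : ℝ => -c + x * Real.exp (-(1 - α) * ρ) + b * (ρ * Real.exp (-ρ)))
      atTop (𝓝 (-c)) := by
    simpa using ((h1.const_mul x).const_add (-c)).add (h2.const_mul b)
  have h4 := Real.tendsto_exp_atTop.atTop_mul_neg (by linarith : -c < 0) h3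
  refine h4.congr fun ρ => ?_
  have e1 : Real.exp ρ * Real.exp (-(1 - α) * ρ) = Real.exp (α * ρ) := by
    rw [← Real.exp_add]; ring_nf
  have e2 : Real.exp ρ * Real.exp (-ρ) = 1 := by rw [← Real.exp_add]; simp
  linear_combination x * e1 + b * ρ * e2

lemma growth_exp {α c : ℝ} (x b : ℝ) (hα : α < 1) (hc : 0 < c) :
    Tendsto (fun ρ : ℝ => Real.exp (-c * Real.exp ρ + x * Real.exp (α * ρ) + b * ρ)) atTop (𝓝 0) :=
  Real.tendsto_exp_atBot.comp (growth x b hα hc)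

lemma growth_int {α c : ℝ} (x b : ℝ) (hα : α < 1) (hc : 0 < c) :
    IntegrableOn (fun ρ : ℝ => Real.exp (-c * Real.exp ρ + x * Real.exp (α * ρ) + b * ρ))
      (Ioi 0) := by
  apply integrable_of_isBigO_exp_neg (b := 1) one_pos
  · fun_prop
  · have := growth_exp (α := α) (c := c) x (b + 1) hα hc
    have h2 := this.isBigO_one ℝ
    have h3 := h2.mul (Asymptotics.isBigO_refl (fun ρ : ℝ => Real.exp (-1 * ρ)) atTop)
    refine (h3.congr (fun ρ => ?_) (fun ρ => ?_))
    · rw [← Real.exp_add]; ring_nf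
    · simp

/-- bound in the sector θ0 ≤ θ ≤ π -/
lemma wg_bound (α x b ρ θ θ0 : ℝ) (h0 : 0 ≤ θ0) (h1 : θ0 ≤ θ) (h2 : θ ≤ Real.pi) :
    ‖wg α x b (ρ + θ * Complex.I)‖ ≤
    Real.exp (-(-Real.cos θ0) * Real.exp ρ + |x| * Real.exp (α * ρ) + b * ρ) := by
  rw [wg_norm]
  apply Real.exp_le_exp.2
  have hc : Real.cos θ ≤ Real.cos θ0 := Real.cos_le_cos_of_nonneg_of_le_pi h0 h2 h1
  have h3 : -(x * (Real.exp (α * ρ) * Real.cos (α * θ))) ≤ |x| * Real.exp (α * ρ) := by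
    have : |x * (Real.exp (α * ρ) * Real.cos (α * θ))| ≤ |x| * Real.exp (α * ρ) := by
      rw [abs_mul, abs_mul, abs_of_pos (Real.exp_pos _)]
      have := mul_le_mul_of_nonneg_left (Real.abs_cos_le_one (α * θ)) (Real.exp_pos (α * ρ)).le
      rw [mul_one] at this
      exact mul_le_mul_of_nonneg_left this (abs_nonneg _)
    linarith [neg_abs_le (x * (Real.exp (α * ρ) * Real.cos (α * θ)))]
  have h4 := mul_le_mul_of_nonneg_left hc (Real.exp_pos ρ).le
  linarith

lemma wH_ver (α x b ρ s t C : ℝ) (hst : s ≤ t)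
    (hC : ∀ θ ∈ Icc s t, ‖wg α x b (ρ + θ * Complex.I)‖ ≤ C) :
    ‖wH α x b (ρ + t * Complex.I) - wH α x b (ρ + s * Complex.I)‖ ≤ C * (t - s) := by
  have := (convex_Icc s t).norm_image_sub_le_of_norm_hasDerivWithin_le
    (f := fun θ : ℝ => wH α x b (ρ + θ * Complex.I))
    (f' := fun θ => wg α x b (ρ + θ * Complex.I) * Complex.I) (C := C)
    (fun θ _ => (hasDerivAt_ver θ ρ (wH_deriv α x b _)).hasDerivWithinAt)
    (fun θ hθ => by simpa using hC θ hθ) (left_mem_Icc.2 hst) (right_mem_Icc.2 hst)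
  simpa [abs_of_nonneg (sub_nonneg.2 hst)] using this

/-- the contour integral -/
noncomputable def wL (θ0 : ℝ) (g : ℂ → ℂ) : ℂ :=
  Complex.I * (∫ t in (0:ℝ)..θ0, g (t * Complex.I)) + ∫ ρ in Ioi (0:ℝ), g (ρ + θ0 * Complex.I)

lemma cos_neg_of {θ0 : ℝ} (h1 : Real.pi / 2 < θ0) (h2 : θ0 < Real.pi) : 0 < - Real.cos θ0 := by
  have := Real.cos_neg_of_pi_div_two_lt_of_lt h1 (by linarith [Real.pi_pos])
  linarith

lemma wg_int {α θ0 : ℝ} (x b : ℝ) (hα : α < 1) (h1 : Real.pi / 2 < θ0) (h2 : θ0 < Real.pi) :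
    IntegrableOn (fun ρ : ℝ => wg α x b (ρ + θ0 * Complex.I)) (Ioi 0) := by
  refine (growth_int (α := α) |x| b hα (cos_neg_of h1 h2)).mono' ?_ ?_
  · exact ((wg_continuous α x b).comp (by fun_prop)).aestronglyMeasurable
  · exact Eventually.of_forall fun ρ =>
      wg_bound α x b ρ θ0 θ0 (by linarith [Real.pi_pos]) le_rfl h2.le

lemma wH_tendsto {α θ0 : ℝ} (x b : ℝ) (hα : α < 1) (h1 : Real.pi / 2 < θ0) (h2 : θ0 < Real.pi) :
    Tendsto (fun ρ : ℝ => wH α x b (ρ + θ0 * Complex.I)) atTop (𝓝 (wL θ0 (wg α x b))) := by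
  have hv : Complex.I * (∫ t in (0:ℝ)..θ0, wg α x b (t * Complex.I))
      = wH α x b (θ0 * Complex.I) := by
    have := intervalIntegral.integral_eq_sub_of_hasDerivAt (a := 0) (b := θ0)
      (f := fun θ : ℝ => wH α x b ((0:ℝ) + θ * Complex.I))
      (fun θ _ => (hasDerivAt_ver θ 0 (wH_deriv α x b _)))
      (by
        apply Continuous.intervalIntegrable
        exact ((wg_continuous α x b).comp (by fun_prop)).mul continuous_const)
    simp only [Complex.ofReal_zero, zero_add, zero_mul, wH_zero, sub_zero,
      intervalIntegral.integral_mul_const] at this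
    rw [← this, mul_comm]
  have hh := intervalIntegral_tendsto_integral_Ioi 0 (wg_int x b hα h1 h2) tendsto_id
  have h3 := hh.const_add (wH α x b (θ0 * Complex.I))
  unfold wL
  rw [hv]
  refine h3.congr fun R => ?_
  have := intervalIntegral.integral_eq_sub_of_hasDerivAt (a := 0) (b := R)
      (f := fun r : ℝ => wH α x b (r + θ0 * Complex.I))
      (fun r _ => (hasDerivAt_hor θ0 r (wH_deriv α x b _)))
      (by
        apply Continuous.intervalIntegrable
        exact ((wg_continuous α x b).comp (by fun_prop)))
  simp only [id, this]
  simp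

/-- uniform convergence in the sector -/
lemma wH_tendsto' {α θ0 : ℝ} (x b : ℝ) (hα : α < 1) (h1 : Real.pi / 2 < θ0) (h2 : θ0 < Real.pi)
    {ι : Type*} {l : Filter ι} {ρ θ : ι → ℝ} (hρ : Tendsto ρ l atTop)
    (hθ : ∀ᶠ i in l, θ i ∈ Icc θ0 Real.pi) :
    Tendsto (fun i => wH α x b (ρ i + θ i * Complex.I)) l (𝓝 (wL θ0 (wg α x b))) := by
  have h0 : 0 ≤ θ0 := by linarith [Real.pi_pos]
  have hd : Tendsto (fun i => wH α x b (ρ i + θ i * Complex.I) - wH α x b (ρ i + θ0 * Complex.I))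
      l (𝓝 0) := by
    have hg := ((growth_exp (α := α) |x| b hα (cos_neg_of h1 h2)).comp hρ).mul_const (Real.pi)
    rw [zero_mul] at hg
    refine squeeze_zero_norm' ?_ hg
    filter_upwards [hθ] with i hi
    refine (wH_ver α x b (ρ i) θ0 (θ i) _ hi.1 (fun t ht =>
      wg_bound α x b (ρ i) t θ0 h0 ht.1 (ht.2.trans hi.2))).trans ?_
    exact mul_le_mul_of_nonneg_left (by linarith [hi.2]) (Real.exp_pos _).le
  have := hd.add ((wH_tendsto x b hα h1 h2).comp hρ)
  simpa using this


lemma wL_rec {α θ0 : ℝ} (a : ℝ) (hα : α < 1) (h1 : Real.pi / 2 < θ0) (h2 : θ0 < Real.pi) :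
    (wL θ0 (wg α 0 (a + 1))).im = - a * (wL θ0 (wg α 0 a)).im := by
  have hD : ∀ w, HasDerivAt (fun w => wH α 0 (a + 1) w + a * wH α 0 a w - wg α 0 a w) 0 w := by
    intro w
    have e1 : HasDerivAt (wg α 0 a) (wg α 0 (a + 1) w + a * wg α 0 a w) w := by
      have : HasDerivAt (fun w => Complex.exp w - (0:ℝ) * Complex.exp (α * w) + a * w)
          (Complex.exp w + a) w := by
        have := ((Complex.hasDerivAt_exp w).sub (((hasDerivAt_id w).const_mul
          (α : ℂ)).cexp.const_mul ((0:ℝ) : ℂ))).add ((hasDerivAt_id w).const_mul (a : ℂ))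
        exact HasDerivAt.congr_deriv this (by simp)
      have h3 := this.cexp
      refine HasDerivAt.congr_deriv h3 ?_
      unfold wg
      have : Complex.exp (Complex.exp w - (0:ℝ) * Complex.exp (α * w) + (a + 1 : ℝ) * w) =
        Complex.exp (Complex.exp w - (0:ℝ) * Complex.exp (α * w) + a * w) * Complex.exp w := by
        rw [← Complex.exp_add]; push_cast; ring_nf
      rw [this]; ring
    have := ((wH_deriv α 0 (a+1) w).add ((wH_deriv α 0 a w).const_mul (a:ℂ))).sub e1
    exact HasDerivAt.congr_deriv this (by ring)
  have hc : ∀ w, wH α 0 (a + 1) w + a * wH α 0 a w - wg α 0 a w = - wg α 0 a 0 := by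
    intro w
    have := is_const_of_deriv_eq_zero (fun r => (hD r).differentiableAt) (fun r => (hD r).deriv) w 0
    simpa [wH_zero] using this
  have hg : Tendsto (fun ρ : ℝ => wg α 0 a (ρ + θ0 * Complex.I)) atTop (𝓝 0) :=
    squeeze_zero_norm (fun ρ => wg_bound α 0 a ρ θ0 θ0 (by linarith [Real.pi_pos]) le_rfl h2.le)
      (growth_exp |0| a hα (cos_neg_of h1 h2))
  have ht := ((wH_tendsto 0 (a+1) hα h1 h2).add ((wH_tendsto 0 a hα h1 h2).const_mul (a:ℂ))).sub hg
  simp only [hc] at ht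
  have := tendsto_nhds_unique ht tendsto_const_nhds
  have h3 := congrArg Complex.im this
  have h4 := wg_real α 0 a 0
  simp at h3 h4
  rw [h4] at h3
  linarith

lemma wL_zero {α θ0 : ℝ} (hα : α < 1) (h1 : Real.pi / 2 < θ0) (h2 : θ0 < Real.pi) :
    (wL θ0 (wg α 0 0)).im = Real.pi := by
  -- Im H(ρ + iπ) is constant
  have hwg : ∀ w, wg α 0 0 w = Complex.exp (Complex.exp w) := by intro w; simp [wg]
  have hconst : ∀ ρ : ℝ, (wH α 0 0 (ρ + Real.pi * Complex.I)).im
      = (wH α 0 0 ((0:ℝ) + Real.pi * Complex.I)).im := by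
    intro ρ
    have h : ∀ r : ℝ, HasDerivAt (fun r : ℝ => (wH α 0 0 (r + Real.pi * Complex.I)).im) 0 r := by
      intro r
      have := hasDerivAt_im (hasDerivAt_hor Real.pi r (H := wH α 0 0) (wH_deriv α 0 0 _))
      convert this using 1
      rw [hwg, Complex.exp_add, Complex.exp_pi_mul_I]
      have : Complex.exp r * -1 = ((-Real.exp r : ℝ) : ℂ) := by push_cast; ring
      rw [this, ← Complex.ofReal_exp, Complex.ofReal_im]
    exact is_const_of_deriv_eq_zero (fun r => (h r).differentiableAt) (fun r => (h r).deriv) ρ 0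
  have hT : Tendsto (fun ρ : ℝ => (wH α 0 0 (ρ + Real.pi * Complex.I)).im) atTop
      (𝓝 (wL θ0 (wg α 0 0)).im) :=
    (Complex.continuous_im.tendsto _).comp
      (wH_tendsto' 0 0 hα h1 h2 tendsto_id (Eventually.of_forall fun _ => ⟨h2.le, le_rfl⟩))
  have hA : Tendsto (fun ρ : ℝ => (wH α 0 0 (ρ + Real.pi * Complex.I)).im) atBot
      (𝓝 Real.pi) := by
    rw [tendsto_iff_norm_sub_tendsto_zero]
    have hb : Tendsto (fun ρ : ℝ => 2 * Real.exp ρ * Real.pi) atBot (𝓝 0) := by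
      simpa using (Real.tendsto_exp_atBot.const_mul 2).mul_const Real.pi
    refine squeeze_zero' (Eventually.of_forall fun _ => norm_nonneg _) ?_ hb
    filter_upwards [eventually_le_atBot 0] with ρ hρ
    have := (convex_Icc 0 Real.pi).norm_image_sub_le_of_norm_hasDerivWithin_le
      (f := fun θ : ℝ => wH α 0 0 (ρ + θ * Complex.I) - (ρ + θ * Complex.I))
      (f' := fun θ => (wg α 0 0 (ρ + θ * Complex.I) - 1) * Complex.I) (C := 2 * Real.exp ρ)
      (fun θ _ => (hasDerivAt_ver θ ρ
        ((wH_deriv α 0 0 _).sub (hasDerivAt_id _))).hasDerivWithinAt)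
      (fun θ hθ => by
        rw [hwg, norm_mul, Complex.norm_I, mul_one]
        have hn : ‖Complex.exp (ρ + θ * Complex.I)‖ = Real.exp ρ := by
          rw [Complex.norm_exp]; simp
        have := Complex.norm_exp_sub_one_le (x := Complex.exp (ρ + θ * Complex.I))
          (by rw [hn]; exact Real.exp_le_one_iff.2 hρ)
        rwa [hn] at this) (left_mem_Icc.2 Real.pi_pos.le) (right_mem_Icc.2 Real.pi_pos.le)
    have h3 := (Complex.abs_im_le_norm _).trans this
    have h4 := wH_real α 0 0 ρ
    simp only [Complex.ofReal_zero, zero_mul, add_zero, Complex.sub_im, h4, Complex.add_im,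
      Complex.ofReal_im, Complex.mul_im, Complex.I_im, Complex.I_re, mul_one, mul_zero, zero_add,
      sub_zero, Complex.ofReal_re, Real.norm_eq_abs, abs_of_pos Real.pi_pos] at h3
    simpa using h3
  simp only [hconst] at hT hA
  rw [tendsto_nhds_unique hT tendsto_const_nhds, tendsto_nhds_unique tendsto_const_nhds hA]

lemma sin_Gamma (a : ℝ) (ha : 0 < a) :
    Real.sin (Real.pi * a) * Real.Gamma a = Real.pi / Real.Gamma (1 - a) := by
  have h := Real.Gamma_mul_Gamma_one_sub a
  have hG := (Real.Gamma_pos_of_pos ha).ne'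
  by_cases hs : Real.sin (Real.pi * a) = 0
  · rw [hs] at h ⊢
    have : Real.Gamma (1 - a) = 0 := by simpa [hG] using h
    simp [this]
  · have : Real.Gamma (1 - a) ≠ 0 := by
      intro h0; rw [h0, mul_zero] at h
      exact div_ne_zero Real.pi_pos.ne' hs h.symm
    rw [eq_div_iff hs] at h
    rw [eq_div_iff this]
    linarith

lemma wL_pos {α θ0 a : ℝ} (ha : 0 < a) (hα : α < 1) (h1 : Real.pi / 2 < θ0) (h2 : θ0 < Real.pi) :
    (wL θ0 (wg α 0 a)).im = Real.pi / Real.Gamma (1 - a) := by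
  rw [← sin_Gamma a ha]
  have hT : Tendsto (fun ρ : ℝ => (wH α 0 a (ρ + Real.pi * Complex.I)).im) atTop
      (𝓝 (wL θ0 (wg α 0 a)).im) :=
    (Complex.continuous_im.tendsto _).comp
      (wH_tendsto' 0 a hα h1 h2 tendsto_id (Eventually.of_forall fun _ => ⟨h2.le, le_rfl⟩))
  have hA : Tendsto (fun ρ : ℝ => (wH α 0 a (ρ + Real.pi * Complex.I)).im) atBot (𝓝 0) := by
    have hb : Tendsto (fun ρ : ℝ => Real.exp (Real.exp ρ + a * ρ) * Real.pi) atBot (𝓝 0) := by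
      have : Tendsto (fun ρ : ℝ => Real.exp ρ + a * ρ) atBot atBot :=
        Real.tendsto_exp_atBot.add_atBot (tendsto_id.const_mul_atBot ha)
      simpa using (Real.tendsto_exp_atBot.comp this).mul_const Real.pi
    refine squeeze_zero_norm (fun ρ => ?_) hb
    have := wH_ver α 0 a ρ 0 Real.pi (Real.exp (Real.exp ρ + a * ρ)) Real.pi_pos.le (by
      intro θ _
      rw [wg_norm]
      apply Real.exp_le_exp.2
      nlinarith [Real.cos_le_one θ, Real.exp_pos ρ])
    have h3 := (Complex.abs_im_le_norm _).trans this
    simpa [wH_real] using h3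
  set f : ℝ → ℝ := fun r => (wH α 0 a ((Real.log r : ℝ) + Real.pi * Complex.I)).im with hf
  have hd : ∀ r ∈ Ioi (0:ℝ), HasDerivAt f
      (Real.sin (Real.pi * a) * (Real.exp (-r) * r ^ (a - 1))) r := by
    intro r hr
    have hr : 0 < r := hr
    have := (hasDerivAt_im (hasDerivAt_hor Real.pi (Real.log r) (H := wH α 0 a)
      (wH_deriv α 0 a _))).comp r (Real.hasDerivAt_log hr.ne')
    refine HasDerivAt.congr_deriv this ?_
    have e : wg α 0 a ((Real.log r : ℝ) + Real.pi * Complex.I) =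
        ((Real.exp (-r) * r ^ a : ℝ) : ℂ) * Complex.exp ((Real.pi * a : ℝ) * Complex.I) := by
      unfold wg
      rw [Complex.exp_add _ ((Real.pi : ℂ) * Complex.I), Complex.exp_pi_mul_I,
        ← Complex.ofReal_exp, Real.exp_log hr, Real.rpow_def_of_pos hr, ← Real.exp_add]
      push_cast
      rw [← Complex.exp_add]
      ring_nf
    rw [e, Complex.im_ofReal_mul, Complex.exp_ofReal_mul_I_im]
    rw [Real.rpow_sub_one hr.ne']
    field_simp
  have hu : ContinuousWithinAt (Function.update f 0 0) (Ici 0) 0 := by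
    rw [← Ioi_insert, continuousWithinAt_insert_self, continuousWithinAt_update_same]
    have : Ioi (0:ℝ) \ {0} = Ioi 0 := by simp
    rw [this]
    exact hA.comp Real.tendsto_log_nhdsGT_zero
  have := integral_Ioi_of_hasDerivAt_of_tendsto (f := Function.update f 0 0) hu
    (f' := fun r => Real.sin (Real.pi * a) * (Real.exp (-r) * r ^ (a - 1)))
    (m := (wL θ0 (wg α 0 a)).im)
    (fun r hr => (hd r hr).congr_of_eventuallyEq (by
      filter_upwards [Ioi_mem_nhds hr] with s hs
      exact Function.update_of_ne (ne_of_gt hs) _ _))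
    ((Real.GammaIntegral_convergent ha).const_mul _)
    ((hT.comp Real.tendsto_log_atTop).congr' (by
      filter_upwards [eventually_gt_atTop 0] with s hs
      exact (Function.update_of_ne (ne_of_gt hs) _ _).symm))
  rw [integral_const_mul, ← Real.Gamma_eq_integral ha] at this
  simp only [Function.update_self, sub_zero] at this
  exact this.symm

lemma wL_all {α θ0 : ℝ} (hα : α < 1) (h1 : Real.pi / 2 < θ0) (h2 : θ0 < Real.pi) (a : ℝ) :
    (wL θ0 (wg α 0 a)).im = Real.pi / Real.Gamma (1 - a) := by
  have key : ∀ n : ℕ, ∀ a : ℝ, -n < a → (wL θ0 (wg α 0 a)).im = Real.pi / Real.Gamma (1 - a) := by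
    intro n
    induction n with
    | zero => intro a ha; exact wL_pos (by simpa using ha) hα h1 h2
    | succ n ih =>
      intro a ha
      rcases lt_trichotomy a 0 with h | h | h
      · have h3 := ih (a + 1) (by push_cast at ha; linarith)
        rw [wL_rec a hα h1 h2] at h3
        have h4 := Real.Gamma_add_one (s := -a) (by linarith)
        have h5 : 0 < Real.Gamma (-a) := Real.Gamma_pos_of_pos (by linarith)
        rw [show (1 - (a + 1)) = -a by ring] at h3
        rw [show (1 - a) = -a + 1 by ring, h4]
        have : -a ≠ 0 := by linarith
        rw [eq_div_iff h5.ne'] at h3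
        rw [eq_div_iff (mul_ne_zero this h5.ne')]
        linarith
      · subst h
        simpa using wL_zero hα h1 h2
      · exact wL_pos h hα h1 h2
  obtain ⟨n, hn⟩ := exists_nat_gt (-a)
  exact key n a (by linarith)


lemma wg_hasSum (α x b : ℝ) (w : ℂ) :
    HasSum (fun n : ℕ => (((-x) ^ n / n.factorial : ℝ) : ℂ) * wg α 0 (b + α * n) w)
      (wg α x b w) := by
  have h := (NormedSpace.expSeries_div_hasSum_exp (-(x:ℂ) * Complex.exp (α * w))).mul_left
    (wg α 0 b w)
  rw [← Complex.exp_eq_exp_ℂ] at h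
  have e : wg α x b w = wg α 0 b w * Complex.exp (-(x:ℂ) * Complex.exp (α * w)) := by
    unfold wg; rw [← Complex.exp_add]; push_cast; ring_nf
  rw [e]
  refine h.congr_fun fun n => ?_
  have e2 : wg α 0 (b + α * n) w = wg α 0 b w * Complex.exp (α * w) ^ n := by
    unfold wg; rw [← Complex.exp_nat_mul, ← Complex.exp_add]; push_cast; ring_nf
  rw [e2, mul_pow]; push_cast; ring

/-- norm bound of the terms -/
noncomputable def wbd (α x b θ ρ : ℝ) (n : ℕ) : ℝ :=
  Real.exp (Real.exp ρ * Real.cos θ + b * ρ) * ((|x| * Real.exp (α * ρ)) ^ n / n.factorial)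

lemma wbd_hasSum (α x b θ ρ : ℝ) : HasSum (wbd α x b θ ρ)
    (Real.exp (-(-Real.cos θ) * Real.exp ρ + |x| * Real.exp (α * ρ) + b * ρ)) := by
  have h := (NormedSpace.expSeries_div_hasSum_exp (|x| * Real.exp (α * ρ))).mul_left
    (Real.exp (Real.exp ρ * Real.cos θ + b * ρ))
  rw [← Real.exp_eq_exp_ℝ, ← Real.exp_add] at h
  have e : -(-Real.cos θ) * Real.exp ρ + |x| * Real.exp (α * ρ) + b * ρ =
      Real.exp ρ * Real.cos θ + b * ρ + |x| * Real.exp (α * ρ) := by ring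
  rw [e]
  exact h

lemma wbd_bound (α x b θ ρ : ℝ) (n : ℕ) :
    ‖(((-x) ^ n / n.factorial : ℝ) : ℂ) * wg α 0 (b + α * n) (ρ + θ * Complex.I)‖
      ≤ wbd α x b θ ρ n := by
  rw [norm_mul, wg_norm, Complex.norm_real, Real.norm_eq_abs, abs_div, abs_pow, abs_neg,
    Nat.abs_cast]
  unfold wbd
  rw [mul_pow, ← Real.exp_nat_mul]
  have : Real.exp (Real.exp ρ * Real.cos θ - 0 * (Real.exp (α * ρ) * Real.cos (α * θ))
      + (b + α * n) * ρ) = Real.exp (Real.exp ρ * Real.cos θ + b * ρ) * Real.exp (n * (α * ρ)) := by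
    rw [← Real.exp_add]; ring_nf
  rw [this]
  apply le_of_eq; ring

lemma wL_hasSum {α θ0 : ℝ} (x b : ℝ) (hα : α < 1) (h1 : Real.pi / 2 < θ0) (h2 : θ0 < Real.pi) :
    HasSum (fun n : ℕ => (((-x) ^ n / n.factorial : ℝ) : ℂ) * wL θ0 (wg α 0 (b + α * n)))
      (wL θ0 (wg α x b)) := by
  have hA : HasSum (fun n : ℕ => ∫ ρ in Ioi (0:ℝ), (((-x) ^ n / n.factorial : ℝ) : ℂ) *
      wg α 0 (b + α * n) (ρ + θ0 * Complex.I)) (∫ ρ in Ioi (0:ℝ), wg α x b (ρ + θ0 * Complex.I)) := by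
    apply hasSum_integral_of_dominated_convergence (fun n ρ => wbd α x b θ0 ρ n)
    · intro n
      exact (continuous_const.mul ((wg_continuous α 0 _).comp (by fun_prop))).aestronglyMeasurable
    · exact fun n => Eventually.of_forall fun ρ => wbd_bound α x b θ0 ρ n
    · exact Eventually.of_forall fun ρ => (wbd_hasSum α x b θ0 ρ).summable
    · simp_rw [fun ρ => (wbd_hasSum α x b θ0 ρ).tsum_eq]
      exact growth_int |x| b hα (cos_neg_of h1 h2)
    · exact Eventually.of_forall fun ρ => wg_hasSum α x b _
  have hB : HasSum (fun n : ℕ => ∫ t in (0:ℝ)..θ0, (((-x) ^ n / n.factorial : ℝ) : ℂ) *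
      wg α 0 (b + α * n) (t * Complex.I)) (∫ t in (0:ℝ)..θ0, wg α x b (t * Complex.I)) := by
    apply intervalIntegral.hasSum_integral_of_dominated_convergence (fun n t => wbd α x b t 0 n)
    · intro n
      exact (continuous_const.mul ((wg_continuous α 0 _).comp (by fun_prop))).aestronglyMeasurable
    · refine fun n => Eventually.of_forall fun t _ => ?_
      simpa using wbd_bound α x b t 0 n
    · exact Eventually.of_forall fun t _ => (wbd_hasSum α x b t 0).summable
    · simp_rw [fun t => (wbd_hasSum α x b t 0).tsum_eq]
      apply Continuous.intervalIntegrable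
      fun_prop
    · exact Eventually.of_forall fun ρ _ => wg_hasSum α x b _
  have := (hB.mul_left Complex.I).add hA
  unfold wL
  refine this.congr_fun fun n => ?_
  rw [intervalIntegral.integral_const_mul, integral_const_mul]
  ring

lemma wright_hasSum {α θ0 : ℝ} (x β : ℝ) (hα : α < 1) (h1 : Real.pi / 2 < θ0) (h2 : θ0 < Real.pi) :
    HasSum (fun n : ℕ => (-x) ^ n / ((n.factorial : ℝ) * Real.Gamma (β + -α * n)))
      ((wL θ0 (wg α x (1 - β))).im / Real.pi) := by
  have h := (Complex.hasSum_im (wL_hasSum x (1 - β) hα h1 h2)).div_const Real.pi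
  refine h.congr_fun fun n => ?_
  rw [Complex.im_ofReal_mul, wL_all hα h1 h2]
  rw [show 1 - (1 - β + α * n) = β + -α * n by ring]
  have := Real.pi_pos.ne'
  rw [div_mul_div_comm, div_div]
  exact (mul_div_mul_right _ _ this).symm

lemma wright_eq {α θ0 : ℝ} (x β : ℝ) (hα : α < 1) (h1 : Real.pi / 2 < θ0) (h2 : θ0 < Real.pi) :
    wright (-α) β (-x) = (wL θ0 (wg α x (1 - β))).im / Real.pi :=
  (wright_hasSum x β hα h1 h2).tsum_eq

lemma exists_theta {α : ℝ} (hα0 : 0 < α) (hα : α < 1) :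
    ∃ θ0, Real.pi / 2 < θ0 ∧ θ0 < Real.pi ∧ α * θ0 < Real.pi / 2 := by
  have : Real.pi / 2 < min Real.pi (Real.pi / 2 / α) := by
    apply lt_min
    · linarith [Real.pi_pos]
    · rw [lt_div_iff₀ hα0]; nlinarith [Real.pi_pos]
  obtain ⟨t, h1, h2⟩ := exists_between this
  refine ⟨t, h1, h2.trans_le (min_le_left _ _), ?_⟩
  have := h2.trans_le (min_le_right _ _)
  rw [lt_div_iff₀ hα0] at this
  linarith

lemma wright_decay {α : ℝ} (hα0 : 0 < α) (hα : α < 1) (β : ℝ) :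
    Tendsto (fun x : ℝ => wright (-α) β (-x)) atTop (𝓝 0) := by
  obtain ⟨θ0, h1, h2, h3⟩ := exists_theta hα0 hα
  have h0 : 0 < θ0 := by linarith [Real.pi_pos]
  simp_rw [fun x => wright_eq x β hα h1 h2]
  set b := 1 - β
  have hcos : ∀ t ∈ Icc 0 θ0, 0 < Real.cos (α * t) := fun t ht =>
    Real.cos_pos_of_mem_Ioo ⟨by nlinarith [ht.1, Real.pi_pos], by nlinarith [ht.2]⟩
  have hpt : ∀ ρ : ℝ, ∀ t ∈ Icc 0 θ0,
      Tendsto (fun x : ℝ => wg α x b (ρ + t * Complex.I)) atTop (𝓝 0) := by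
    intro ρ t ht
    rw [tendsto_zero_iff_norm_tendsto_zero]
    simp_rw [wg_norm]
    apply Real.tendsto_exp_atBot.comp
    have hp : 0 < Real.exp (α * ρ) * Real.cos (α * t) := mul_pos (Real.exp_pos _) (hcos t ht)
    have : Tendsto (fun x : ℝ => x * (Real.exp (α * ρ) * Real.cos (α * t))) atTop atTop :=
      tendsto_id.atTop_mul_const hp
    have h5 := tendsto_atBot_add_const_left atTop (Real.exp ρ * Real.cos t + b * ρ)
      (tendsto_neg_atTop_atBot.comp this)
    refine h5.congr fun x => ?_
    simp; ring
  have hbd : ∀ x : ℝ, 0 ≤ x → ∀ ρ : ℝ, ∀ t ∈ Icc 0 θ0,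
      ‖wg α x b (ρ + t * Complex.I)‖ ≤ Real.exp (Real.exp ρ * Real.cos t + b * ρ) := by
    intro x hx ρ t ht
    rw [wg_norm]
    apply Real.exp_le_exp.2
    have : 0 ≤ x * (Real.exp (α * ρ) * Real.cos (α * t)) :=
      mul_nonneg hx (mul_pos (Real.exp_pos _) (hcos t ht)).le
    linarith
  have hA : Tendsto (fun x : ℝ => ∫ ρ in Ioi (0:ℝ), wg α x b (ρ + θ0 * Complex.I)) atTop
      (𝓝 (∫ _ in Ioi (0:ℝ), 0)) := by
    apply tendsto_integral_filter_of_dominated_convergence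
      (fun ρ => Real.exp (Real.exp ρ * Real.cos θ0 + b * ρ))
    · exact Eventually.of_forall fun x =>
        ((wg_continuous α x _).comp (by fun_prop)).aestronglyMeasurable
    · filter_upwards [eventually_ge_atTop 0] with x hx
      exact Eventually.of_forall fun ρ => hbd x hx ρ θ0 ⟨h0.le, le_rfl⟩
    · refine (growth_int (α := α) 0 b hα (cos_neg_of h1 h2)).congr
        (Eventually.of_forall fun ρ => ?_)
      simp; ring
    · exact Eventually.of_forall fun ρ => hpt ρ θ0 ⟨h0.le, le_rfl⟩
  have hB : Tendsto (fun x : ℝ => ∫ t in (0:ℝ)..θ0, wg α x b (t * Complex.I)) atTop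
      (𝓝 (∫ _ in (0:ℝ)..θ0, 0)) := by
    apply intervalIntegral.tendsto_integral_filter_of_dominated_convergence
      (fun t => Real.exp (Real.exp 0 * Real.cos t + b * 0))
    · exact Eventually.of_forall fun x =>
        ((wg_continuous α x _).comp (by fun_prop)).aestronglyMeasurable
    · filter_upwards [eventually_ge_atTop 0] with x hx
      refine Eventually.of_forall fun t ht => ?_
      rw [uIoc_of_le h0.le] at ht
      simpa using hbd x hx 0 t ⟨ht.1.le, ht.2⟩
    · apply Continuous.intervalIntegrable
      fun_prop
    · refine Eventually.of_forall fun t ht => ?_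
      rw [uIoc_of_le h0.le] at ht
      simpa using hpt 0 t ⟨ht.1.le, ht.2⟩
  have hL : Tendsto (fun x : ℝ => wL θ0 (wg α x b)) atTop (𝓝 0) := by
    have := (hB.const_mul Complex.I).add hA
    simpa [wL] using this
  have := ((Complex.continuous_im.tendsto _).comp hL).div_const Real.pi
  simpa using this

lemma wright_summable {α : ℝ} (hα0 : 0 < α) (hα : α < 1) (x β : ℝ) :
    Summable (fun n : ℕ => (-x) ^ n / ((n.factorial : ℝ) * Real.Gamma (β + -α * n))) := by
  obtain ⟨θ0, h1, h2, h3⟩ := exists_theta hα0 hα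
  exact (wright_hasSum x β hα h1 h2).summable

lemma wright_deriv {α : ℝ} (hα0 : 0 < α) (hα : α < 1) (x β : ℝ) :
    HasDerivAt (fun x => wright (-α) β (-x)) (-wright (-α) (β - α) (-x)) x := by
  -- derivative terms
  have hs : ∀ y : ℝ, Summable (fun n : ℕ => y ^ n / ((n.factorial : ℝ) *
      Real.Gamma (β + -α * n))) := fun y => by simpa using wright_summable hα0 hα (-y) β
  have hs' : ∀ y : ℝ, Summable (fun n : ℕ => y ^ n / ((n.factorial : ℝ) *
      Real.Gamma (β - α + -α * n))) := fun y => by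
        simpa using wright_summable hα0 hα (-y) (β - α)
  set d : ℕ → ℝ → ℝ := fun n y => n * y ^ (n - 1) / ((n.factorial : ℝ) * Real.Gamma (β + -α * n))
    with hd
  have hd0 : ∀ y, d 0 y = 0 := fun y => by simp [hd]
  have hd1 : ∀ y n, d (n+1) y = y ^ n / ((n.factorial : ℝ) * Real.Gamma (β - α + -α * n)) := by
    intro y n
    simp only [hd, Nat.add_sub_cancel, Nat.factorial_succ]
    push_cast
    rw [show β + -α * ((n:ℝ) + 1) = β - α + -α * n by ring]
    have : (n:ℝ) + 1 ≠ 0 := by positivity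
    rw [mul_assoc, mul_div_mul_left _ _ this]
  have hsd : ∀ y, Summable (fun n => d n y) := by
    intro y
    rw [← summable_nat_add_iff 1]
    simp_rw [hd1]
    exact hs' y
  set R := |x| + 1
  have hW : HasDerivAt (fun z => ∑' n : ℕ, z ^ n / ((n.factorial : ℝ) * Real.Gamma (β + -α * n)))
      (∑' n, d n (-x)) (-x) := by
    apply hasDerivAt_tsum_of_isPreconnected (u := fun n => ‖d n R‖) (t := Ioo (-R) R)
      (hsd R).norm isOpen_Ioo isPreconnected_Ioo (y₀ := -x)
    · intro n y _
      exact (hasDerivAt_pow n y).div_const _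
    · intro n y hy
      simp only [hd, norm_div, norm_mul, norm_pow]
      have : ‖y‖ ≤ ‖R‖ := by
        rw [Real.norm_eq_abs, Real.norm_eq_abs]
        exact (abs_le.2 ⟨hy.1.le, hy.2.le⟩).trans (le_abs_self _)
      gcongr
    · exact ⟨by have := le_abs_self x; simp only [R]; linarith,
        by have := neg_abs_le x; simp only [R]; linarith⟩
    · exact hs (-x)
    · exact ⟨by have := le_abs_self x; simp only [R]; linarith,
        by have := neg_abs_le x; simp only [R]; linarith⟩
  have e : ∑' n, d n (-x) = wright (-α) (β - α) (-x) := by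
    rw [(hsd (-x)).tsum_eq_zero_add, hd0, zero_add]
    simp_rw [hd1]
    rfl
  rw [e] at hW
  have := hW.comp x (hasDerivAt_neg x)
  exact HasDerivAt.congr_deriv this (by ring)

lemma wright_pos_step {α : ℝ} (hα0 : 0 < α) (hα : α < 1) (β : ℝ)
    (h : ∀ x : ℝ, 0 < x → 0 < wright (-α) (β - α) (-x)) :
    ∀ x : ℝ, 0 < x → 0 < wright (-α) β (-x) := by
  have hanti : StrictAntiOn (fun x => wright (-α) β (-x)) (Ici 0) := by
    apply strictAntiOn_of_deriv_neg (convex_Ici 0)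
    · exact fun x _ => (wright_deriv hα0 hα x β).continuousAt.continuousWithinAt
    · intro x hx
      rw [interior_Ici] at hx
      rw [(wright_deriv hα0 hα x β).deriv]
      linarith [h x hx]
  intro x hx
  have h1 : wright (-α) β (-(x+1)) < wright (-α) β (-x) :=
    hanti (mem_Ici.2 hx.le) (mem_Ici.2 (by linarith)) (by linarith)
  refine lt_of_le_of_lt ?_ h1
  refine le_of_tendsto (wright_decay hα0 hα β) ?_
  filter_upwards [eventually_ge_atTop (x+1)] with y hy
  exact hanti.antitoneOn (mem_Ici.2 (by linarith)) (mem_Ici.2 (by linarith)) hy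

lemma wright_pos_of_base {α : ℝ} (hα0 : 0 < α) (hα : α < 1)
    (hb : ∀ β : ℝ, 0 ≤ β → β < 1 → ∀ x : ℝ, 0 < x → 0 < wright (-α) β (-x)) (β : ℝ) (hβ : 0 ≤ β) :
    ∀ x : ℝ, 0 < x → 0 < wright (-α) β (-x) := by
  have key : ∀ n : ℕ, ∀ β : ℝ, 0 ≤ β → β < 1 + n * α →
      ∀ x : ℝ, 0 < x → 0 < wright (-α) β (-x) := by
    intro n
    induction n with
    | zero => intro β h0 h1; exact hb β h0 (by simpa using h1)
    | succ n ih =>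
      intro β h0 h1
      by_cases h : β < 1
      · exact hb β h0 h
      · apply wright_pos_step hα0 hα
        apply ih
        · linarith
        · push_cast at h1; linarith
  obtain ⟨n, hn⟩ := exists_nat_gt (β / α)
  rw [div_lt_iff₀ hα0] at hn
  exact key n β hβ (by linarith)


lemma cexp_split (ρ θ : ℝ) : Complex.exp (ρ + θ * Complex.I) =
    ((Real.exp ρ * Real.cos θ : ℝ) : ℂ) + ((Real.exp ρ * Real.sin θ : ℝ) : ℂ) * Complex.I := by
  rw [Complex.exp_add_mul_I]; push_cast; ring

lemma cexp_split' (α ρ θ : ℝ) : Complex.exp (α * (ρ + θ * Complex.I)) =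
    ((Real.exp (α * ρ) * Real.cos (α * θ) : ℝ) : ℂ) +
    ((Real.exp (α * ρ) * Real.sin (α * θ) : ℝ) : ℂ) * Complex.I := by
  rw [← cexp_split]; push_cast; ring_nf

/-- the steepest descent curve -/
noncomputable def wl (α x θ : ℝ) : ℝ :=
  (Real.log x + Real.log (Real.sin (α * θ)) - Real.log (Real.sin θ)) / (1 - α)

noncomputable def wK (α x b : ℝ) (w : ℂ) : ℂ := wH α x b w - wg α x b w / b

lemma wK_deriv (α x b : ℝ) (hb : 0 < b) (w : ℂ) :
    HasDerivAt (wK α x b)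
      (((-1 / b : ℝ) : ℂ) * ((Complex.exp w - x * α * Complex.exp (α * w)) * wg α x b w)) w := by
  have h0 : HasDerivAt (fun w => Complex.exp w - x * Complex.exp (α * w) + b * w)
      (Complex.exp w - x * (Complex.exp (α * w) * α) + b) w := by
    have := ((Complex.hasDerivAt_exp w).sub (((hasDerivAt_id w).const_mul
          (α : ℂ)).cexp.const_mul (x : ℂ))).add ((hasDerivAt_id w).const_mul (b : ℂ))
    exact HasDerivAt.congr_deriv this (by simp)
  have h1 : HasDerivAt (wg α x b) _ w := h0.cexp
  refine HasDerivAt.congr_deriv ((wH_deriv α x b w).sub (h1.div_const (b:ℂ))) ?_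
  have hb' : (b:ℂ) ≠ 0 := by exact_mod_cast hb.ne'
  change wg α x b w - (wg α x b w * _) / b = _
  push_cast
  field_simp
  ring

lemma wK_real (α x b ρ : ℝ) : (wK α x b ρ).im = 0 := by
  unfold wK
  rw [Complex.sub_im, wH_real, Complex.div_ofReal_im, wg_real]; simp

lemma wK_continuous (α x b : ℝ) (hb : 0 < b) : Continuous (wK α x b) :=
  continuous_iff_continuousAt.2 fun w => (wK_deriv α x b hb w).continuousAt

section
variable {α x b θ : ℝ}

lemma sin_a_pos (hα0 : 0 < α) (hα : α ≤ 1) (hθ : θ ∈ Ioo 0 Real.pi) : 0 < Real.sin (α * θ) :=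
  Real.sin_pos_of_pos_of_lt_pi (mul_pos hα0 hθ.1) (by nlinarith [hθ.1, hθ.2])

lemma wl_eq (hα0 : 0 < α) (hα : α < 1) (hx : 0 < x) (hθ : θ ∈ Ioo 0 Real.pi) :
    Real.exp (wl α x θ) * Real.sin θ = x * Real.exp (α * wl α x θ) * Real.sin (α * θ) := by
  have h1 := sin_a_pos hα0 hα.le hθ
  have h2 := Real.sin_pos_of_pos_of_lt_pi hθ.1 hθ.2
  have h3 : (1 - α) * wl α x θ =
      Real.log x + Real.log (Real.sin (α * θ)) - Real.log (Real.sin θ) := by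
    unfold wl
    field_simp [show (1 - α) ≠ 0 by linarith]
  have h4 : Real.exp (wl α x θ) = Real.exp (α * wl α x θ) * Real.exp ((1 - α) * wl α x θ) := by
    rw [← Real.exp_add]; ring_nf
  have h5 : Real.exp ((1 - α) * wl α x θ) = x * Real.sin (α * θ) / Real.sin θ := by
    rw [h3, Real.exp_sub, Real.exp_add, Real.exp_log hx, Real.exp_log h1, Real.exp_log h2]
  rw [h4, h5]
  field_simp

lemma wg_curve_im (hα0 : 0 < α) (hα : α < 1) (hx : 0 < x) (hθ : θ ∈ Ioo 0 Real.pi) :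
    ∃ M : ℝ, 0 < M ∧ wg α x b (wl α x θ + θ * Complex.I) = (M : ℂ) * Complex.exp ((b * θ : ℝ) * Complex.I) := by
  refine ⟨Real.exp (Real.exp (wl α x θ) * Real.cos θ - x * (Real.exp (α * wl α x θ) *
    Real.cos (α * θ)) + b * wl α x θ), Real.exp_pos _, ?_⟩
  unfold wg
  rw [Complex.ofReal_exp, ← Complex.exp_add]
  congr 1
  have := wl_eq hα0 hα hx hθ
  have hc := congrArg (fun y : ℝ => (y : ℂ)) this
  rw [cexp_split, cexp_split']
  push_cast at hc ⊢
  linear_combination Complex.I * hc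

lemma wl_deriv (hα0 : 0 < α) (hα : α < 1) (hθ : θ ∈ Ioo 0 Real.pi) :
    HasDerivAt (wl α x) ((α * Real.cos (α * θ) / Real.sin (α * θ) - Real.cos θ / Real.sin θ)
      / (1 - α)) θ := by
  have h1 := sin_a_pos hα0 hα.le hθ
  have h2 := Real.sin_pos_of_pos_of_lt_pi hθ.1 hθ.2
  have e1 : HasDerivAt (fun t => Real.log (Real.sin (α * t))) _ θ :=
    (((hasDerivAt_id θ).const_mul α).sin).log h1.ne'
  have e2 : HasDerivAt (fun t => Real.log (Real.sin t)) _ θ :=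
    (Real.hasDerivAt_sin θ).log h2.ne'
  refine HasDerivAt.congr_deriv (((e1.const_add (Real.log x)).sub e2).div_const (1 - α)) ?_
  simp; ring

lemma wk_deriv (hα0 : 0 < α) (hα : α < 1) (hx : 0 < x) (hb0 : 0 < b) (hb1 : b ≤ 1)
    (hθ : θ ∈ Ioo 0 Real.pi) :
    ∃ d : ℝ, 0 < d ∧ HasDerivAt (fun t : ℝ => (wK α x b (wl α x t + t * Complex.I)).im) d θ := by
  have h1 := sin_a_pos hα0 hα.le hθ
  have h2 := Real.sin_pos_of_pos_of_lt_pi hθ.1 hθ.2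
  have h3 := sin_a_pos hb0 hb1 hθ
  obtain ⟨M, hM, hg⟩ := wg_curve_im (b := b) hα0 hα hx hθ
  have hE := wl_eq hα0 hα hx hθ
  have hl := wl_deriv (x := x) hα0 hα hθ
  set l := (α * Real.cos (α * θ) / Real.sin (α * θ) - Real.cos θ / Real.sin θ) / (1 - α) with hldef
  have hw : HasDerivAt (fun t : ℝ => (wl α x t : ℂ) + t * Complex.I) (l + Complex.I) θ := by
    have := hl.ofReal_comp.add ((Complex.ofRealCLM.hasDerivAt (x := θ)).mul_const Complex.I)
    exact HasDerivAt.congr_deriv this (by simp)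
  have hk := hasDerivAt_im ((wK_deriv α x b hb0 (wl α x θ + θ * Complex.I)).comp θ hw)
  set q := (1 - α) * (Real.exp (wl α x θ) * Real.sin θ) with hq
  have hqpos : 0 < q := mul_pos (by linarith) (mul_pos (Real.exp_pos _) h2)
  refine ⟨1 / b * (q * (1 + l ^ 2)) * (M * Real.sin (b * θ)), by positivity, ?_⟩
  refine HasDerivAt.congr_deriv hk ?_
  have hE' : Complex.exp (wl α x θ + θ * Complex.I) -
      x * α * Complex.exp (α * (wl α x θ + θ * Complex.I)) = ((-q * l : ℝ) : ℂ) + (q : ℝ) * Complex.I := by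
    have hp : Real.exp (wl α x θ) * Real.cos θ - x * α * (Real.exp (α * wl α x θ) *
        Real.cos (α * θ)) = -q * l := by
      have : (1 - α) ≠ 0 := by linarith
      rw [hq, hldef]
      field_simp
      linear_combination (α * Real.cos (α * θ)) * hE
    have hqq : Real.exp (wl α x θ) * Real.sin θ - x * α * (Real.exp (α * wl α x θ) *
        Real.sin (α * θ)) = q := by
      rw [hq]; linear_combination α * hE
    rw [cexp_split, cexp_split', ← hp, ← hqq]
    push_cast
    ring
  rw [hE', hg]
  have : (((-1 / b : ℝ) : ℂ) * ((((-q * l : ℝ) : ℂ) + (q : ℝ) * Complex.I) *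
      ((M : ℂ) * Complex.exp ((b * θ : ℝ) * Complex.I))) * (l + Complex.I)) =
      ((1 / b * (q * (1 + l ^ 2)) * M : ℝ) : ℂ) * Complex.exp ((b * θ : ℝ) * Complex.I) := by
    push_cast
    linear_combination (-1 / (b:ℂ) * q * M * Complex.exp ((b * θ) * Complex.I)) * Complex.I_sq
  rw [this, Complex.im_ofReal_mul, Complex.exp_ofReal_mul_I_im]
  ring

lemma wl_tendsto_zero (hα0 : 0 < α) (hα : α < 1) :
    Tendsto (wl α x) (𝓝[>] 0) (𝓝 ((Real.log x + Real.log α) / (1 - α))) := by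
  have e1 : Tendsto (fun t : ℝ => t⁻¹ * Real.sin (α * t)) (𝓝[>] 0) (𝓝 α) := by
    have h : HasDerivAt (fun t : ℝ => Real.sin (α * t)) α 0 := by
      have := ((hasDerivAt_id (0:ℝ)).const_mul α).sin
      exact HasDerivAt.congr_deriv this (by simp)
    have := h.tendsto_slope_zero_right
    simpa using this
  have e2 : Tendsto (fun t : ℝ => t⁻¹ * Real.sin t) (𝓝[>] 0) (𝓝 1) := by
    have := (Real.hasDerivAt_sin 0).tendsto_slope_zero_right
    simpa using this
  have e3 := ((e1.log hα0.ne').sub (e2.log one_ne_zero)).const_add (Real.log x)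
  have e4 := e3.div_const (1 - α)
  rw [Real.log_one, sub_zero] at e4
  refine e4.congr' ?_
  filter_upwards [Ioo_mem_nhdsGT Real.pi_pos] with t ht
  have h1 := sin_a_pos hα0 hα.le ht
  have h2 := Real.sin_pos_of_pos_of_lt_pi ht.1 ht.2
  have h3 : t⁻¹ ≠ 0 := inv_ne_zero ht.1.ne'
  rw [Real.log_mul h3 h1.ne', Real.log_mul h3 h2.ne']
  unfold wl; ring

lemma wl_tendsto_pi (hα0 : 0 < α) (hα : α < 1) :
    Tendsto (wl α x) (𝓝[<] Real.pi) atTop := by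
  have hs : 0 < Real.sin (α * Real.pi) :=
    Real.sin_pos_of_pos_of_lt_pi (mul_pos hα0 Real.pi_pos) (by nlinarith [Real.pi_pos])
  have e1 : Tendsto (fun t : ℝ => Real.log x + Real.log (Real.sin (α * t))) (𝓝[<] Real.pi)
      (𝓝 (Real.log x + Real.log (Real.sin (α * Real.pi)))) := by
    have : Continuous (fun t : ℝ => Real.sin (α * t)) := by fun_prop
    exact (((this.tendsto Real.pi).mono_left nhdsWithin_le_nhds).log hs.ne').const_add _
  have e2 : Tendsto Real.sin (𝓝[<] Real.pi) (𝓝[>] 0) := by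
    apply tendsto_nhdsWithin_iff.2 ⟨?_, ?_⟩
    · have := (Real.continuous_sin.tendsto Real.pi).mono_left
        (nhdsWithin_le_nhds (s := Iio Real.pi))
      simpa using this
    · filter_upwards [Ioo_mem_nhdsLT Real.pi_pos] with t ht
      exact Real.sin_pos_of_pos_of_lt_pi ht.1 ht.2
  have e3 := e1.add_atTop (tendsto_neg_atBot_atTop.comp (Real.tendsto_log_nhdsGT_zero.comp e2))
  have e4 := e3.atTop_div_const (show 0 < 1 - α by linarith)
  refine e4.congr fun t => ?_
  simp [wl, sub_eq_add_neg]

lemma wright_pos_base (hα0 : 0 < α) (hα : α < 1) (β : ℝ) (h0 : 0 ≤ β) (h1 : β < 1) (x : ℝ)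
    (hx : 0 < x) : 0 < wright (-α) β (-x) := by
  obtain ⟨θ0, t1, t2, t3⟩ := exists_theta hα0 hα
  rw [wright_eq x β hα t1 t2]
  apply div_pos _ Real.pi_pos
  set b := 1 - β with hbdef
  have hb0 : 0 < b := by linarith
  have hb1 : b ≤ 1 := by linarith
  set k : ℝ → ℝ := fun t : ℝ => (wK α x b (wl α x t + t * Complex.I)).im with hk
  have hmono : StrictMonoOn k (Ioo 0 Real.pi) := by
    apply strictMonoOn_of_deriv_pos (convex_Ioo 0 Real.pi)
    · intro t ht
      obtain ⟨d, _, hd⟩ := wk_deriv hα0 hα hx hb0 hb1 ht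
      exact hd.continuousAt.continuousWithinAt
    · intro t ht
      rw [interior_Ioo] at ht
      obtain ⟨d, hd0, hd⟩ := wk_deriv hα0 hα hx hb0 hb1 ht
      rw [hd.deriv]; exact hd0
  have hpi := Real.pi_pos
  have hlim0 : Tendsto k (𝓝[>] 0) (𝓝 0) := by
    have e1 := (Complex.continuous_ofReal.tendsto _).comp (wl_tendsto_zero (x := x) hα0 hα)
    have e2 : Tendsto (fun t : ℝ => (t : ℂ) * Complex.I) (𝓝[>] 0) (𝓝 0) := by
      have : Continuous (fun t : ℝ => (t : ℂ) * Complex.I) := by fun_prop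
      simpa using (this.tendsto 0).mono_left (nhdsWithin_le_nhds (s := Ioi 0))
    have e3 := e1.add e2
    rw [add_zero] at e3
    have e4 := (Complex.continuous_im.tendsto _).comp (((wK_continuous α x b hb0).tendsto _).comp e3)
    rw [wK_real] at e4
    exact e4
  have hq : 0 ≤ k (Real.pi / 4) := by
    refine le_of_tendsto hlim0 ?_
    filter_upwards [Ioo_mem_nhdsGT (show 0 < Real.pi / 4 by linarith)] with t ht
    exact (hmono ⟨ht.1, by linarith [ht.2]⟩ ⟨by linarith, by linarith⟩ ht.2).le
  have hh : 0 < k (Real.pi / 2) :=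
    lt_of_le_of_lt hq (hmono ⟨by linarith, by linarith⟩ ⟨by linarith, by linarith⟩ (by linarith))
  refine lt_of_lt_of_le hh ?_
  have hT : Tendsto (fun t : ℝ => (wH α x b (wl α x t + t * Complex.I)).im) (𝓝[<] Real.pi)
      (𝓝 (wL θ0 (wg α x b)).im) :=
    (Complex.continuous_im.tendsto _).comp
      (wH_tendsto' x b hα t1 t2 (wl_tendsto_pi hα0 hα) (by
        filter_upwards [Ioo_mem_nhdsLT t2] with t ht
        exact ⟨ht.1.le, ht.2.le⟩))
  refine ge_of_tendsto hT ?_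
  filter_upwards [Ioo_mem_nhdsLT (show Real.pi / 2 < Real.pi by linarith)] with t ht
  have htm : t ∈ Ioo 0 Real.pi := ⟨by linarith [ht.1], ht.2⟩
  have h5 := (hmono ⟨by linarith, by linarith⟩ htm ht.1).le
  refine h5.trans ?_
  obtain ⟨M, hM, hg⟩ := wg_curve_im (b := b) hα0 hα hx htm
  simp only [hk, wK]
  rw [Complex.sub_im, Complex.div_ofReal_im, hg, Complex.im_ofReal_mul, Complex.exp_ofReal_mul_I_im]
  have := sin_a_pos hb0 hb1 htm
  have : 0 < M * Real.sin (b * t) / b := by positivity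
  linarith
end

theorem wright_probability_density (α β : ℝ) (hα : α ∈ Set.Ioo (0 : ℝ) 1) (hβ : 0 ≤ β) :
    (∀ x : ℝ, 0 < x → 0 < wright (-α) β (-x)) ∧
    IntegrableOn (fun x => wright (-α) β (-x)) (Set.Ioi 0) ∧
    (∫ x in Set.Ioi 0, wright (-α) β (-x)) = 1 / Real.Gamma (α + β) ∧
    (∫ x in Set.Ioi 0, Real.Gamma (α + β) * wright (-α) β (-x)) = 1 := by
  obtain ⟨hα0, hα1⟩ := hα
  have hpos := wright_pos_of_base hα0 hα1 (wright_pos_base hα0 hα1) β hβ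
  have hd : ∀ x ∈ Set.Ici (0:ℝ), HasDerivAt (fun x => -wright (-α) (α + β) (-x))
      (wright (-α) β (-x)) x := by
    intro x _
    have := (wright_deriv hα0 hα1 x (α + β)).neg
    rw [neg_neg, show α + β - α = β by ring] at this
    exact this
  have ht : Tendsto (fun x => -wright (-α) (α + β) (-x)) atTop (𝓝 0) := by
    simpa using (wright_decay hα0 hα1 (α + β)).neg
  have hI := integrableOn_Ioi_deriv_of_nonneg' hd (fun x hx => (hpos x hx).le) ht
  have h0 : wright (-α) (α + β) (-0) = 1 / Real.Gamma (α + β) := by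
    unfold wright
    rw [tsum_eq_single 0]
    · simp
    · intro n hn; simp [hn]
  have hV := integral_Ioi_of_hasDerivAt_of_nonneg' hd (fun x hx => (hpos x hx).le) ht
  rw [h0, sub_neg_eq_add, zero_add] at hV
  refine ⟨hpos, hI, hV, ?_⟩
  rw [integral_const_mul, hV]
  exact mul_one_div_cancel (Real.Gamma_pos_of_pos (by linarith)).ne'
end
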